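/- arXiv:2404.14972 — 2 statements merged into one kernel-verified Lean document; each statement's English description precedes it below -/
import Mathlib

section
/- Let H be a Hamiltonian pattern of size k (i.e. a graph on [k] which, after relabelling vertices, contains the Hamiltonian cycle with edges (1,2),(2,3),…,(k−1,k),(k,1)), and assume k > 2/(3−τ) and k is odd. Assume the weight variable W satisfies P(W > x) = c x^{1−τ}(1+o(1)) for x ≥ 1. Then E[N^{sub}(H)]/n^{k(3−τ)/2} converges, as n → ∞, to a finite positive constant I^{sub}(H) proportional to ∫_{(0,∞)^k} ∏_{i=1}^k y_i^{−τ} ∫_{(T^d)^k} ∏_{(i,j)∈E_H} min( y_i y_j / (μ ‖x_i − x_j‖^d), 1 )^γ dx dy, and E[N^{ind}(H)]/n^{k(3−τ)/2} converges to a finite positive constant I^{ind}(H) proportional to the same integral with the integrand multiplied by ∏_{(i,j)∉E_H} (1 − min( y_i y_j / (μ ‖x_i − x_j‖^d), 1 )^γ). -/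
open MeasureTheory Filter Finset

noncomputable section

instance : Fact ((0:ℝ) < 1) := ⟨one_pos⟩

/-- The `d`-dimensional torus `ℝ^d/ℤ^d`, with the sup of coordinatewise circle distances. -/
abbrev Torus (d : ℕ) := Fin d → AddCircle (1 : ℝ)

/-- Sample space of the GIRG on `n` vertices: weights, positions, and iid uniform
`[0,1]` coins deciding the presence of each potential edge. -/
abbrev GirgΩ (d n : ℕ) := (Fin n → ℝ) × (Fin n → Torus d) × (Sym2 (Fin n) → ℝ)

/-- The law of the randomness of the GIRG: iid weights with law `μW`, iid uniform positions
on the torus, iid uniform coins. -/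
def girgMeasure (μW : Measure ℝ) (d n : ℕ) : Measure (GirgΩ d n) :=
  (Measure.pi fun _ : Fin n => μW).prod
    ((Measure.pi fun _ : Fin n => (volume : Measure (Torus d))).prod
      (Measure.pi fun _ : Sym2 (Fin n) => volume.restrict (Set.Icc (0:ℝ) 1)))

/-- mean `μ = E[W]` of the weight distribution -/
def wMean (μW : Measure ℝ) : ℝ := ∫ x, x ∂μW

/-- Power-law tail assumption: `W ≥ 1` a.s. and `P(W > x) = c x^{1-τ} (1+o(1))` as `x → ∞`. -/
def WeightTail (τ c : ℝ) (μW : Measure ℝ) : Prop :=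
  0 < c ∧ μW (Set.Iio 1) = 0 ∧
    Tendsto (fun x : ℝ => (μW (Set.Ioi x)).toReal / (c * x ^ (1 - τ))) atTop (nhds 1)

/-- GIRG connection probability `min(1, (w_u w_v / (n μ ‖x_u - x_v‖^d))^γ)`. -/
def connProb (γ μbar : ℝ) (d n : ℕ) (w : Fin n → ℝ) (x : Fin n → Torus d)
    (u v : Fin n) : ℝ :=
  min 1 ((w u * w v / ((n : ℝ) * μbar * dist (x u) (x v) ^ d)) ^ γ)

/-- `u` and `v` are joined by an edge of the GIRG in outcome `ω`. -/
def girgEdge (γ μbar : ℝ) (d n : ℕ) (ω : GirgΩ d n) (u v : Fin n) : Prop :=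
  u ≠ v ∧ ω.2.2 s(u, v) ≤ connProb γ μbar d n ω.1 ω.2.1 u v

/-- the window `[ε t, t/ε]` -/
def windowIcc (ε t : ℝ) : Set ℝ := Set.Icc (ε * t) (t / ε)

/-- The set `M_ε^{(α,β)}` of ordered `k`-tuples of distinct vertices with prescribed
weights and inter-distances. -/
def Mset {k : ℕ} (ε : ℝ) (α : Fin k → ℝ) (β : Fin k → Fin k → ℝ) (d n : ℕ)
    (w : Fin n → ℝ) (x : Fin n → Torus d) : Set (Fin k → Fin n) :=
  {v | Function.Injective v ∧
    (∀ i, w (v i) ∈ windowIcc ε ((n : ℝ) ^ (α i))) ∧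
    (∀ i j : Fin k, i < j → dist (x (v i)) (x (v j)) ∈ windowIcc ε ((n : ℝ) ^ (β i j)))}

/-- `N^{sub}(H; M_ε^{(α,β)})` -/
def nSubM {k : ℕ} (H : SimpleGraph (Fin k)) (γ μbar ε : ℝ) (α : Fin k → ℝ)
    (β : Fin k → Fin k → ℝ) (d n : ℕ) (ω : GirgΩ d n) : ℕ :=
  Set.ncard {v : Fin k → Fin n | v ∈ Mset ε α β d n ω.1 ω.2.1 ∧
    ∀ i j : Fin k, H.Adj i j → girgEdge γ μbar d n ω (v i) (v j)}

/-- `N^{ind}(H; M_ε^{(α,β)})` -/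
def nIndM {k : ℕ} (H : SimpleGraph (Fin k)) (γ μbar ε : ℝ) (α : Fin k → ℝ)
    (β : Fin k → Fin k → ℝ) (d n : ℕ) (ω : GirgΩ d n) : ℕ :=
  Set.ncard {v : Fin k → Fin n | v ∈ Mset ε α β d n ω.1 ω.2.1 ∧
    ∀ i j : Fin k, i ≠ j → (H.Adj i j ↔ girgEdge γ μbar d n ω (v i) (v j))}

/-- `N^{sub}(H)` -/
def nSubTotal {k : ℕ} (H : SimpleGraph (Fin k)) (γ μbar : ℝ) (d n : ℕ)
    (ω : GirgΩ d n) : ℕ :=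
  Set.ncard {v : Fin k → Fin n | Function.Injective v ∧
    ∀ i j : Fin k, H.Adj i j → girgEdge γ μbar d n ω (v i) (v j)}

/-- `N^{ind}(H)` -/
def nIndTotal {k : ℕ} (H : SimpleGraph (Fin k)) (γ μbar : ℝ) (d n : ℕ)
    (ω : GirgΩ d n) : ℕ :=
  Set.ncard {v : Fin k → Fin n | Function.Injective v ∧
    ∀ i j : Fin k, i ≠ j → (H.Adj i j ↔ girgEdge γ μbar d n ω (v i) (v j))}

/-- `β` read as a symmetric matrix (only entries with `i < j` are meaningful). -/
def bsym {k : ℕ} (β : Fin k → Fin k → ℝ) (i j : Fin k) : ℝ := if i < j then β i j else β j i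

/-- The feasible region `F`. -/
def Feasible (τ : ℝ) (d : ℕ) {k : ℕ} (α : Fin k → ℝ) (β : Fin k → Fin k → ℝ) : Prop :=
  (∀ i, α i ∈ Set.Icc (0 : ℝ) (1 / (τ - 1))) ∧
  (∀ i j : Fin k, i < j → β i j ∈ Set.Icc (-(1 / (d : ℝ))) 0) ∧
  (∀ i j s : Fin k, i < j → s ≠ i → s ≠ j → β i j ≤ max (bsym β i s) (bsym β j s))

/-- `min_{i<j} β_{ij}` (with value `0 = sInf ∅` for the first vertex `j`,
which does not contribute). -/
def minBeta {k : ℕ} (β : Fin k → Fin k → ℝ) (j : Fin k) : ℝ :=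
  sInf {x : ℝ | ∃ i, i < j ∧ x = β i j}

open scoped Classical in
/-- The exponent `f_H(α,β)`. -/
def fExp (τ γ : ℝ) (d : ℕ) {k : ℕ} (H : SimpleGraph (Fin k))
    (α : Fin k → ℝ) (β : Fin k → Fin k → ℝ) : ℝ :=
  (k : ℝ) + (1 - τ) * ∑ i, α i + (d : ℝ) * ∑ j, minBeta β j +
    γ * ∑ p ∈ Finset.univ.filter (fun p : Fin k × Fin k => p.1 < p.2 ∧ H.Adj p.1 p.2),
        min (α p.1 + α p.2 - (d : ℝ) * β p.1 p.2 - 1) 0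

/-- Extra constraints for the induced optimization problem:
`α_i + α_j ≤ 1 + d β_{ij}` for all non-edges. -/
def IndConstr (d : ℕ) {k : ℕ} (H : SimpleGraph (Fin k)) (α : Fin k → ℝ)
    (β : Fin k → Fin k → ℝ) : Prop :=
  ∀ i j : Fin k, i < j → ¬H.Adj i j → α i + α j ≤ 1 + (d : ℝ) * β i j

/-- `(α,β)` is an optimal solution of the general optimization problem. -/
def IsOptimalSub (τ γ : ℝ) (d : ℕ) {k : ℕ} (H : SimpleGraph (Fin k))
    (α : Fin k → ℝ) (β : Fin k → Fin k → ℝ) : Prop :=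
  Feasible τ d α β ∧
    ∀ α' β', Feasible τ d α' β' → fExp τ γ d H α' β' ≤ fExp τ γ d H α β

/-- `(α,β)` is an optimal solution of the induced optimization problem. -/
def IsOptimalInd (τ γ : ℝ) (d : ℕ) {k : ℕ} (H : SimpleGraph (Fin k))
    (α : Fin k → ℝ) (β : Fin k → Fin k → ℝ) : Prop :=
  Feasible τ d α β ∧ IndConstr d H α β ∧
    ∀ α' β', Feasible τ d α' β' → IndConstr d H α' β' →
      fExp τ γ d H α' β' ≤ fExp τ γ d H α β

/-- the two kinds of subgraph counts -/
inductive StarKind | ind | sub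

/-- `N^⋆(H; M_ε^{(α,β)})` -/
def starNM (s : StarKind) {k : ℕ} (H : SimpleGraph (Fin k)) (γ μbar ε : ℝ) (α : Fin k → ℝ)
    (β : Fin k → Fin k → ℝ) (d n : ℕ) (ω : GirgΩ d n) : ℕ :=
  match s with
  | .sub => nSubM H γ μbar ε α β d n ω
  | .ind => nIndM H γ μbar ε α β d n ω

/-- `N^⋆(H)` -/
def starNTotal (s : StarKind) {k : ℕ} (H : SimpleGraph (Fin k)) (γ μbar : ℝ) (d n : ℕ)
    (ω : GirgΩ d n) : ℕ :=
  match s with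
  | .sub => nSubTotal H γ μbar d n ω
  | .ind => nIndTotal H γ μbar d n ω

/-- optimality in the optimization problem corresponding to `⋆` -/
def starIsOptimal (s : StarKind) (τ γ : ℝ) (d : ℕ) {k : ℕ} (H : SimpleGraph (Fin k))
    (α : Fin k → ℝ) (β : Fin k → Fin k → ℝ) : Prop :=
  match s with
  | .sub => IsOptimalSub τ γ d H α β
  | .ind => IsOptimalInd τ γ d H α β

/-- the optimal value `f_H^*` of the optimization problem corresponding to `⋆` -/
def starOptVal (s : StarKind) (τ γ : ℝ) (d : ℕ) {k : ℕ} (H : SimpleGraph (Fin k)) : ℝ :=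
  match s with
  | .sub => sSup {x | ∃ α β, Feasible τ d α β ∧ x = fExp τ γ d H α β}
  | .ind => sSup {x | ∃ α β, Feasible τ d α β ∧ IndConstr d H α β ∧ x = fExp τ γ d H α β}

/-- `(α,β)` is the unique optimal solution (in the `α`-variables and the
`β`-variables with `i < j`). -/
def UniquelyOptimal (s : StarKind) (τ γ : ℝ) (d : ℕ) {k : ℕ} (H : SimpleGraph (Fin k))
    (α : Fin k → ℝ) (β : Fin k → Fin k → ℝ) : Prop :=
  starIsOptimal s τ γ d H α β ∧
    ∀ α' β', starIsOptimal s τ γ d H α' β' →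
      α' = α ∧ ∀ i j : Fin k, i < j → β' i j = β i j


/-- `H` is a Hamiltonian pattern: after relabelling the vertices it contains the
Hamiltonian cycle `(1,2),(2,3),…,(k-1,k),(k,1)`. -/
def IsHamiltonianPattern {k : ℕ} [NeZero k] (H : SimpleGraph (Fin k)) : Prop :=
  ∃ σ : Equiv.Perm (Fin k), ∀ i : Fin k, H.Adj (σ i) (σ (i + 1))

open scoped Classical in
/-- the integral to which `I^{sub}(H)` is proportional -/
def IsubInt (τ γ μbar : ℝ) (d : ℕ) {k : ℕ} (H : SimpleGraph (Fin k)) : ℝ :=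
  ∫ y : Fin k → ℝ in {y | ∀ i, 0 < y i},
    (∏ i, y i ^ (-τ)) *
      ∫ x : Fin k → Torus d,
        ∏ p ∈ Finset.univ.filter (fun p : Fin k × Fin k => p.1 < p.2 ∧ H.Adj p.1 p.2),
          (min (y p.1 * y p.2 / (μbar * dist (x p.1) (x p.2) ^ d)) 1) ^ γ
        ∂(Measure.pi fun _ => (volume : Measure (Torus d)))
    ∂(Measure.pi fun _ => (volume : Measure ℝ))

open scoped Classical in
/-- the integral to which `I^{ind}(H)` is proportional -/
def IindInt (τ γ μbar : ℝ) (d : ℕ) {k : ℕ} (H : SimpleGraph (Fin k)) : ℝ :=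
  ∫ y : Fin k → ℝ in {y | ∀ i, 0 < y i},
    (∏ i, y i ^ (-τ)) *
      ∫ x : Fin k → Torus d,
        (∏ p ∈ Finset.univ.filter (fun p : Fin k × Fin k => p.1 < p.2 ∧ H.Adj p.1 p.2),
          (min (y p.1 * y p.2 / (μbar * dist (x p.1) (x p.2) ^ d)) 1) ^ γ) *
        ∏ p ∈ Finset.univ.filter (fun p : Fin k × Fin k => p.1 < p.2 ∧ ¬H.Adj p.1 p.2),
          (1 - (min (y p.1 * y p.2 / (μbar * dist (x p.1) (x p.2) ^ d)) 1) ^ γ)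
        ∂(Measure.pi fun _ => (volume : Measure (Torus d)))
    ∂(Measure.pi fun _ => (volume : Measure ℝ))

/-!
Summing over injective tuples, `E[N^⋆(H)]` is a falling factorial times the expectation of
`g(W₁/√n, …, W_k/√n)`, where `g(y)` is the probability that `k` uniformly placed vertices of
rescaled weights `y` span `H`. Writing the weights as quantiles of uniform variables turns the
rescaled expectation into an integral over the positive orthant whose integrand converges to
`∏ y_i^{-τ} g(y)`, so dominated convergence reduces the theorem to the integrability of that limit.

To bound `g`, delete one edge of the Hamiltonian cycle: along the remaining path the displacements
are independent, so `g(y)` is at most a constant times the product of `min(1, y_i y_{i+1})` over the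
path. The geometric mean over the `k` deletions gives `g(y) ≤ C ∏ min(1, y_i y_{i+1})^{1-1/k}` over
the cycle. In the variables `u_i = log y_i` the integrand is then at most a multiple of
`exp(-δ ∑ |u_i + u_{i+1}|)`, where `δ > 0` because `k > 2/(3-τ)`, and for odd `k` the map
`u ↦ (u_i + u_{i+1})_i` is invertible.
-/

/-! ### The expected number of copies as an integral -/

section Expectation

instance : IsProbabilityMeasure (volume : Measure (AddCircle (1 : ℝ))) := ⟨by simp⟩

instance (d : ℕ) : IsProbabilityMeasure (volume : Measure (Torus d)) := by
  unfold Torus; infer_instance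

instance : IsProbabilityMeasure (volume.restrict (Set.Icc (0 : ℝ) 1)) := ⟨by simp⟩

instance (μW : Measure ℝ) [IsProbabilityMeasure μW] (d n : ℕ) :
    IsProbabilityMeasure (girgMeasure μW d n) := by unfold girgMeasure; infer_instance

/-- An unordered pair of distinct pattern vertices, encoded as `(i, j)` with `i < j`. -/
abbrev VertexPair (k : ℕ) := {p : Fin k × Fin k // p.1 < p.2}

/-- The connection kernel `min(a / (μ r^d), 1)^γ`, where `a` stands for the product of the two
rescaled weights and `r` for the distance. -/
def connKernel (γ μ : ℝ) (d : ℕ) (a r : ℝ) : ℝ := min (a / (μ * r ^ d)) 1 ^ γ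

open scoped Classical in
/-- The contribution of one pair of pattern vertices, adjacent or not, whose images are joined with
probability `q`. -/
def pairFactor (s : StarKind) (adj : Prop) (q : ℝ) : ℝ :=
  if adj then q else match s with
    | .sub => 1
    | .ind => 1 - q

open scoped Classical in
/-- The values of the uniform coin of a pair of vertices, joined with probability `q`, that are
compatible with the requirement of the pattern on this pair. -/
def coinSet (s : StarKind) (adj : Prop) (q : ℝ) : Set ℝ :=
  if adj then Set.Iic q else match s with
    | .sub => Set.univ
    | .ind => Set.Ioi q

/-- The conditional probability that `k` vertices with rescaled weights `y` and positions `x` span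
the pattern `H`. -/
def patternKernel (s : StarKind) {k : ℕ} (H : SimpleGraph (Fin k)) (γ μ : ℝ) (d : ℕ)
    (y : Fin k → ℝ) (x : Fin k → Torus d) : ℝ :=
  ∏ p : VertexPair k, pairFactor s (H.Adj p.1.1 p.1.2)
    (connKernel γ μ d (y p.1.1 * y p.1.2) (dist (x p.1.1) (x p.1.2)))

/-- The pattern kernel averaged over independent uniform positions. -/
def positionIntegral (s : StarKind) {k : ℕ} (H : SimpleGraph (Fin k)) (γ μ : ℝ) (d : ℕ)
    (y : Fin k → ℝ) : ℝ :=
  ∫ x, patternKernel s H γ μ d y x ∂(Measure.pi fun _ ↦ (volume : Measure (Torus d)))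

/-- The outcomes in which the tuple `v` spans the pattern `H`. -/
def copyEvent (s : StarKind) {k : ℕ} (H : SimpleGraph (Fin k)) (γ μ : ℝ) (d n : ℕ)
    (v : Fin k → Fin n) : Set (GirgΩ d n) :=
  {ω | ∀ p : VertexPair k, ω.2.2 s(v p.1.1, v p.1.2) ∈
    coinSet s (H.Adj p.1.1 p.1.2) (connProb γ μ d n ω.1 ω.2.1 (v p.1.1) (v p.1.2))}

variable {s : StarKind} {k d n : ℕ} {H : SimpleGraph (Fin k)} {γ μ : ℝ}

lemma connKernel_nonneg (hμ : 0 ≤ μ) {a r : ℝ} (ha : 0 ≤ a) (hr : 0 ≤ r) :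
    0 ≤ connKernel γ μ d a r := by
  unfold connKernel; positivity

lemma connKernel_le_one (hγ : 0 ≤ γ) (hμ : 0 ≤ μ) {a r : ℝ} (ha : 0 ≤ a) (hr : 0 ≤ r) :
    connKernel γ μ d a r ≤ 1 :=
  Real.rpow_le_one (by positivity) (min_le_right _ _) hγ

lemma measurable_patternKernel :
    Measurable fun z : (Fin k → ℝ) × (Fin k → Torus d) ↦ patternKernel s H γ μ d z.1 z.2 := by
  refine Finset.measurable_fun_prod _ fun p _ ↦ ?_
  unfold pairFactor connKernel
  split_ifs
  · fun_prop
  · cases s <;> fun_prop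

lemma stronglyMeasurable_positionIntegral :
    StronglyMeasurable (positionIntegral s H γ μ d) :=
  (measurable_patternKernel (s := s) (H := H) (γ := γ) (μ := μ)
    (d := d)).stronglyMeasurable.integral_prod_right

lemma connProb_comm (w : Fin n → ℝ) (x : Fin n → Torus d) (u v : Fin n) :
    connProb γ μ d n w x u v = connProb γ μ d n w x v u := by
  unfold connProb; rw [dist_comm, mul_comm (w u)]

lemma girgEdge_comm {ω : GirgΩ d n} {u v : Fin n} :
    girgEdge γ μ d n ω u v ↔ girgEdge γ μ d n ω v u := by
  unfold girgEdge; rw [connProb_comm, Sym2.eq_swap, ne_comm]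

lemma forall_ne_iff_forall_vertexPair {r : Fin k → Fin k → Prop} (hr : ∀ i j, r i j → r j i) :
    (∀ i j, i ≠ j → r i j) ↔ ∀ p : VertexPair k, r p.1.1 p.1.2 :=
  ⟨fun h p ↦ h _ _ p.2.ne, fun h i j hij ↦ hij.lt_or_gt.elim (fun hlt ↦ h ⟨(i, j), hlt⟩)
    fun hgt ↦ hr _ _ (h ⟨(j, i), hgt⟩)⟩

lemma starNTotal_eq_ncard (ω : GirgΩ d n) :
    starNTotal s H γ μ d n ω = {v | Function.Injective v ∧ ω ∈ copyEvent s H γ μ d n v}.ncard := by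
  have hedge {v : Fin k → Fin n} (hv : Function.Injective v) (p : VertexPair k) :
      girgEdge γ μ d n ω (v p.1.1) (v p.1.2) ↔
        ω.2.2 s(v p.1.1, v p.1.2) ≤ connProb γ μ d n ω.1 ω.2.1 (v p.1.1) (v p.1.2) :=
    and_iff_right (hv.ne p.2.ne)
  cases s <;> refine congrArg Set.ncard (Set.ext fun v ↦ and_congr_right fun hv ↦ ?_)
  case ind =>
    rw [forall_ne_iff_forall_vertexPair fun i j h ↦ by rwa [girgEdge_comm, H.adj_comm]]
    refine forall_congr' fun p ↦ ?_
    by_cases hp : H.Adj p.1.1 p.1.2 <;> simp [coinSet, hp, hedge hv]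
  case sub =>
    have hne : (∀ i j, H.Adj i j → girgEdge γ μ d n ω (v i) (v j)) ↔
        ∀ i j, i ≠ j → H.Adj i j → girgEdge γ μ d n ω (v i) (v j) :=
      ⟨fun h i j _ ↦ h i j, fun h i j hij ↦ h i j hij.ne hij⟩
    rw [hne, forall_ne_iff_forall_vertexPair fun i j h ↦ by rwa [girgEdge_comm, H.adj_comm]]
    refine forall_congr' fun p ↦ ?_
    by_cases hp : H.Adj p.1.1 p.1.2 <;> simp [coinSet, hp, hedge hv]

lemma integral_ncard_eq_sum_measureReal {Ω α : Type*} [MeasurableSpace Ω] (P : Measure Ω)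
    [IsFiniteMeasure P] (S : Finset α) {E : α → Set Ω} (hE : ∀ a ∈ S, MeasurableSet (E a)) :
    ∫ ω, ({a | a ∈ S ∧ ω ∈ E a}.ncard : ℝ) ∂P = ∑ a ∈ S, P.real (E a) := by
  classical
  have hcard (ω : Ω) :
      ({a | a ∈ S ∧ ω ∈ E a}.ncard : ℝ) = ∑ a ∈ S, (E a).indicator (fun _ ↦ (1 : ℝ)) ω := by
    simp only [Set.indicator_apply, Finset.sum_boole, ← Set.ncard_coe_finset, Finset.coe_filter]
  simp_rw [hcard]
  rw [integral_finsetSum _ fun a ha ↦ (integrable_const _).indicator (hE a ha)]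
  refine Finset.sum_congr rfl fun a ha ↦ ?_
  rw [integral_indicator_const _ (hE a ha), smul_eq_mul, mul_one]

lemma measureReal_prod_eq_integral {α β : Type*} [MeasurableSpace α] [MeasurableSpace β]
    (ν : Measure α) (ρ : Measure β) [IsFiniteMeasure ρ] {E : Set (α × β)}
    (hE : MeasurableSet E) : (ν.prod ρ).real E = ∫ a, ρ.real (Prod.mk a ⁻¹' E) ∂ν := by
  rw [measureReal_def, Measure.prod_apply hE]
  exact (integral_toReal (measurable_measure_prodMk_left hE).aemeasurable
    (ae_of_all _ fun _ ↦ measure_lt_top _ _)).symm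

lemma measurePreserving_comp_injective {ι κ α : Type*} [Fintype ι] [Fintype κ] [MeasurableSpace α]
    (ν : Measure α) [IsProbabilityMeasure ν] {e : ι → κ} (he : Function.Injective e) :
    MeasurePreserving (fun f : κ → α ↦ f ∘ e) (Measure.pi fun _ ↦ ν) (Measure.pi fun _ ↦ ν) := by
  have hindep : ProbabilityTheory.iIndepFun (fun i (f : κ → α) ↦ f (e i))
      (Measure.pi fun _ ↦ ν) :=
    (ProbabilityTheory.iIndepFun_pi (X := fun _ : κ ↦ id) (μ := fun _ ↦ ν)
      fun _ ↦ aemeasurable_id).precomp he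
  have hmap := (ProbabilityTheory.iIndepFun_iff_map_fun_eq_pi_map
    fun i ↦ (measurable_pi_apply (e i)).aemeasurable).1 hindep
  simp_rw [(measurePreserving_eval (fun _ : κ ↦ ν) _).map_eq] at hmap
  exact ⟨measurable_pi_lambda _ fun i ↦ measurable_pi_apply (e i), hmap⟩

lemma measurableSet_coinSet {adj : Prop} {q : ℝ} : MeasurableSet (coinSet s adj q) := by
  unfold coinSet
  split_ifs
  · exact measurableSet_Iic
  · cases s
    exacts [measurableSet_Ioi, MeasurableSet.univ]

lemma measureReal_coinSet (adj : Prop) {q : ℝ} (h0 : 0 ≤ q) (h1 : q ≤ 1) :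
    (volume.restrict (Set.Icc (0 : ℝ) 1)).real (coinSet s adj q) = pairFactor s adj q := by
  have hIic : (volume.restrict (Set.Icc (0 : ℝ) 1)).real (Set.Iic q) = q := by
    rw [measureReal_restrict_apply measurableSet_Iic, Set.inter_comm, ← Set.Ici_inter_Iic,
      Set.inter_assoc, Set.Iic_inter_Iic, min_eq_right h1, Set.Ici_inter_Iic,
      Real.volume_real_Icc_of_le h0, sub_zero]
  unfold coinSet pairFactor
  split_ifs
  · exact hIic
  · cases s
    · rw [← Set.compl_Iic, probReal_compl_eq_one_sub measurableSet_Iic, hIic]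
    · exact probReal_univ

lemma measurableSet_copyEvent (v : Fin k → Fin n) :
    MeasurableSet (copyEvent s H γ μ d n v) := by
  unfold copyEvent
  rw [Set.ofPred_forall]
  refine MeasurableSet.iInter fun p ↦ ?_
  have hcoin : Measurable fun ω : GirgΩ d n ↦ ω.2.2 s(v p.1.1, v p.1.2) := by fun_prop
  have hprob : Measurable fun ω : GirgΩ d n ↦
      connProb γ μ d n ω.1 ω.2.1 (v p.1.1) (v p.1.2) := by
    unfold connProb; fun_prop
  unfold coinSet
  split_ifs
  · exact measurableSet_le hcoin hprob
  · cases s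
    exacts [measurableSet_lt hprob hcoin, MeasurableSet.univ]

lemma connProb_eq_connKernel (hγ : 0 ≤ γ) (hμ : 0 ≤ μ) {w : Fin n → ℝ} (hw : ∀ u, 0 ≤ w u)
    (x : Fin n → Torus d) (u v : Fin n) :
    connProb γ μ d n w x u v =
      connKernel γ μ d (w u / √n * (w v / √n)) (dist (x u) (x v)) := by
  have hratio : w u / √n * (w v / √n) / (μ * dist (x u) (x v) ^ d) =
      w u * w v / (n * μ * dist (x u) (x v) ^ d) := by
    rw [div_mul_div_comm, Real.mul_self_sqrt n.cast_nonneg, div_div, mul_assoc]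
  have hnonneg : 0 ≤ w u * w v / (n * μ * dist (x u) (x v) ^ d) := by
    have := hw u
    have := hw v
    positivity
  rw [connProb, connKernel, hratio, (Real.monotoneOn_rpow_Ici_of_exponent_nonneg hγ).map_min
    (Set.mem_Ici.2 hnonneg) (Set.mem_Ici.2 zero_le_one), Real.one_rpow, min_comm]

lemma injective_sym2_vertexPair {v : Fin k → Fin n} (hv : Function.Injective v) :
    Function.Injective fun p : VertexPair k ↦ s(v p.1.1, v p.1.2) := by
  rintro ⟨⟨i, j⟩, hij⟩ ⟨⟨i', j'⟩, hij'⟩ h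
  rcases Sym2.eq_iff.1 h with ⟨hi, hj⟩ | ⟨hi, hj⟩
  · exact Subtype.ext (Prod.ext (hv hi) (hv hj))
  · obtain rfl := hv hi
    obtain rfl := hv hj
    exact absurd hij (lt_asymm hij')

lemma measureReal_coins_copyEvent (hγ : 0 ≤ γ) (hμ : 0 ≤ μ) {v : Fin k → Fin n}
    (hv : Function.Injective v) {w : Fin n → ℝ} (hw : ∀ u, 0 ≤ w u) (x : Fin n → Torus d) :
    (Measure.pi fun _ : Sym2 (Fin n) ↦ volume.restrict (Set.Icc (0 : ℝ) 1)).real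
        {c | (w, x, c) ∈ copyEvent s H γ μ d n v} =
      patternKernel s H γ μ d (fun i ↦ w (v i) / √n) (x ∘ v) := by
  let q (p : VertexPair k) : ℝ := connProb γ μ d n w x (v p.1.1) (v p.1.2)
  have hq (p : VertexPair k) : q p = connKernel γ μ d (w (v p.1.1) / √n * (w (v p.1.2) / √n))
      (dist (x (v p.1.1)) (x (v p.1.2))) :=
    connProb_eq_connKernel hγ hμ hw x _ _
  have hnonneg (p : VertexPair k) : 0 ≤ w (v p.1.1) / √n * (w (v p.1.2) / √n) :=
    mul_nonneg (div_nonneg (hw _) (Real.sqrt_nonneg _)) (div_nonneg (hw _) (Real.sqrt_nonneg _))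
  have hset : {c | (w, x, c) ∈ copyEvent s H γ μ d n v} =
      (fun c ↦ c ∘ fun p : VertexPair k ↦ s(v p.1.1, v p.1.2)) ⁻¹'
        Set.univ.pi fun p ↦ coinSet s (H.Adj p.1.1 p.1.2) (q p) := by
    ext c; simp [copyEvent, q]
  have hmp := measurePreserving_comp_injective (volume.restrict (Set.Icc (0 : ℝ) 1))
    (injective_sym2_vertexPair hv)
  rw [hset, measureReal_def, hmp.measure_preimage
    (MeasurableSet.univ_pi fun _ ↦ measurableSet_coinSet).nullMeasurableSet, Measure.pi_pi,
    ENNReal.toReal_prod]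
  refine Finset.prod_congr rfl fun p _ ↦ ?_
  rw [← measureReal_def, measureReal_coinSet, hq]
  · rfl
  · rw [hq]; exact connKernel_nonneg hμ (hnonneg p) dist_nonneg
  · rw [hq]; exact connKernel_le_one hγ hμ (hnonneg p) dist_nonneg

lemma measureReal_copyEvent (hγ : 0 ≤ γ) (hμ : 0 ≤ μ) {μW : Measure ℝ} [IsProbabilityMeasure μW]
    (hW : ∀ᵐ w ∂μW, 0 ≤ w) {v : Fin k → Fin n} (hv : Function.Injective v) :
    (girgMeasure μW d n).real (copyEvent s H γ μ d n v) =
      ∫ w, positionIntegral s H γ μ d (fun i ↦ w i / √n) ∂(Measure.pi fun _ ↦ μW) := by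
  have hE := measurableSet_copyEvent (s := s) (H := H) (γ := γ) (μ := μ) (d := d) v
  have hpos : ∀ᵐ w : Fin n → ℝ ∂(Measure.pi fun _ ↦ μW), ∀ u, 0 ≤ w u :=
    ae_all_iff.2 fun u ↦ (Measure.quasiMeasurePreserving_eval (fun _ ↦ μW) u).ae hW
  have hmeas : StronglyMeasurable fun w : Fin k → ℝ ↦
      positionIntegral s H γ μ d fun i ↦ w i / √n :=
    stronglyMeasurable_positionIntegral.comp_measurable (by fun_prop)
  have hweights := measurePreserving_comp_injective μW hv
  have hpositions := measurePreserving_comp_injective (volume : Measure (Torus d)) hv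
  rw [← hweights.map_eq, integral_map hweights.aemeasurable hmeas.aestronglyMeasurable,
    girgMeasure, measureReal_prod_eq_integral _ _ hE]
  refine integral_congr_ae (hpos.mono fun w hw ↦ ?_)
  dsimp only
  rw [measureReal_prod_eq_integral _ _ (measurable_prodMk_left hE), positionIntegral,
    ← hpositions.map_eq, integral_map hpositions.aemeasurable
      (measurable_patternKernel.of_uncurry_left).aestronglyMeasurable]
  exact integral_congr_ae (ae_of_all _ fun x ↦ measureReal_coins_copyEvent hγ hμ hv hw x)

theorem integral_starNTotal (hγ : 0 ≤ γ) (hμ : 0 ≤ μ) {μW : Measure ℝ} [IsProbabilityMeasure μW]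
    (hW : ∀ᵐ w ∂μW, 0 ≤ w) :
    ∫ ω, (starNTotal s H γ μ d n ω : ℝ) ∂(girgMeasure μW d n) =
      n.descFactorial k *
        ∫ w, positionIntegral s H γ μ d (fun i ↦ w i / √n) ∂(Measure.pi fun _ ↦ μW) := by
  classical
  let S : Finset (Fin k → Fin n) := {v | Function.Injective v}
  have hS {v : Fin k → Fin n} : v ∈ S ↔ Function.Injective v := by simp [S]
  have hcard : S.card = n.descFactorial k := by
    rw [← Fintype.card_subtype, Fintype.card_congr (Equiv.subtypeInjectiveEquivEmbedding _ _),
      Fintype.card_embedding_eq, Fintype.card_fin, Fintype.card_fin]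
  simp_rw [starNTotal_eq_ncard, ← hS]
  rw [integral_ncard_eq_sum_measureReal _ _ fun v _ ↦ measurableSet_copyEvent v,
    Finset.sum_congr rfl fun v hv ↦ measureReal_copyEvent hγ hμ hW (hS.1 hv), Finset.sum_const,
    nsmul_eq_mul, hcard]

end Expectation

/-! ### Coordinatewise change of variables -/

section ChangeOfVariables

variable {ι : Type*} {S : Set ℝ} {φ φ' : ℝ → ℝ}

lemma injOn_piMap (hφ : Set.InjOn φ S) :
    Set.InjOn (Pi.map fun _ : ι ↦ φ) (Set.univ.pi fun _ ↦ S) :=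
  fun _ ha _ hb hab ↦ funext fun i ↦ hφ (ha i trivial) (hb i trivial) (congrFun hab i)

lemma hasFDerivWithinAt_piMap [Finite ι] (hφ : ∀ t ∈ S, HasDerivAt φ (φ' t) t) {t : ι → ℝ}
    (ht : t ∈ Set.univ.pi fun _ ↦ S) :
    HasFDerivWithinAt (Pi.map fun _ : ι ↦ φ)
      (ContinuousLinearMap.pi fun i ↦ (ContinuousLinearMap.toSpanSingleton ℝ (φ' (t i))).comp
        (ContinuousLinearMap.proj i)) (Set.univ.pi fun _ ↦ S) t :=
  have := Fintype.ofFinite ι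
  (hasFDerivAt_pi.2 fun i ↦ (hφ (t i) (ht i trivial)).hasFDerivAt.comp t
    (ContinuousLinearMap.proj (R := ℝ) (φ := fun _ : ι ↦ ℝ) i).hasFDerivAt).hasFDerivWithinAt

variable [Fintype ι]

lemma abs_det_pi_toSpanSingleton (a : ι → ℝ) :
    |(ContinuousLinearMap.pi fun i ↦ (ContinuousLinearMap.toSpanSingleton ℝ (a i)).comp
        (ContinuousLinearMap.proj (R := ℝ) (φ := fun _ : ι ↦ ℝ) i)).det| = ∏ i, |a i| := by
  rw [ContinuousLinearMap.det_pi, Finset.abs_prod]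
  simp [ContinuousLinearMap.det]

lemma integrableOn_univ_pi_image_iff (hS : MeasurableSet S)
    (hφ : ∀ t ∈ S, HasDerivAt φ (φ' t) t) (hinj : Set.InjOn φ S) (f : (ι → ℝ) → ℝ) :
    IntegrableOn f (Set.univ.pi fun _ ↦ φ '' S) ↔
      IntegrableOn (fun t ↦ (∏ i, |φ' (t i)|) * f (fun i ↦ φ (t i)))
        (Set.univ.pi fun _ ↦ S) := by
  rw [← Set.piMap_image_univ_pi, integrableOn_image_iff_integrableOn_abs_det_fderiv_smul volume
    (MeasurableSet.univ_pi fun _ ↦ hS) (fun _ ↦ hasFDerivWithinAt_piMap hφ) (injOn_piMap hinj)]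
  simp only [abs_det_pi_toSpanSingleton, smul_eq_mul]
  rfl

lemma integral_univ_pi_image (hS : MeasurableSet S)
    (hφ : ∀ t ∈ S, HasDerivAt φ (φ' t) t) (hinj : Set.InjOn φ S) (f : (ι → ℝ) → ℝ) :
    ∫ y in Set.univ.pi fun _ ↦ φ '' S, f y =
      ∫ t in Set.univ.pi fun _ ↦ S, (∏ i, |φ' (t i)|) * f (fun i ↦ φ (t i)) := by
  rw [← Set.piMap_image_univ_pi, integral_image_eq_integral_abs_det_fderiv_smul volume
    (MeasurableSet.univ_pi fun _ ↦ hS) (fun _ ↦ hasFDerivWithinAt_piMap hφ) (injOn_piMap hinj)]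
  simp only [abs_det_pi_toSpanSingleton, smul_eq_mul]
  rfl

end ChangeOfVariables

/-! ### Power tails and quantiles -/

section PowerTail

/-- The inverse of the power tail `x ↦ C x^(1 - τ)` on `(0, ∞)`. -/
def powerTailInv (τ C t : ℝ) : ℝ := (C / t) ^ (τ - 1)⁻¹

/-- The open positive orthant, over which the limiting integrals are taken. -/
abbrev posOrthant (ι : Type*) : Set (ι → ℝ) := {y | ∀ i, 0 < y i}

variable {ι : Type*} {τ C t x : ℝ}

lemma posOrthant_eq_univ_pi : posOrthant ι = Set.univ.pi fun _ ↦ Set.Ioi 0 := by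
  ext; simp

lemma measurableSet_posOrthant [Countable ι] : MeasurableSet (posOrthant ι) := by
  rw [posOrthant_eq_univ_pi]; exact MeasurableSet.univ_pi fun _ ↦ measurableSet_Ioi

lemma powerTailInv_pos (hC : 0 < C) (ht : 0 < t) : 0 < powerTailInv τ C t := by
  unfold powerTailInv; positivity

lemma powerTailInv_lt_iff (hτ : 1 < τ) (hC : 0 < C) (ht : 0 < t) (hx : 0 < x) :
    powerTailInv τ C t < x ↔ C * x ^ (1 - τ) < t := by
  rw [powerTailInv, Real.rpow_inv_lt_iff_of_pos (by positivity) hx.le (sub_pos.2 hτ),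
    ← neg_sub τ 1, Real.rpow_neg hx.le, ← div_eq_mul_inv, div_lt_comm₀ ht (by positivity)]

lemma powerTailInv_le_iff (hτ : 1 < τ) (hC : 0 < C) (ht : 0 < t) (hx : 0 < x) :
    powerTailInv τ C t ≤ x ↔ C * x ^ (1 - τ) ≤ t := by
  rw [powerTailInv, Real.rpow_inv_le_iff_of_pos (by positivity) hx.le (sub_pos.2 hτ),
    ← neg_sub τ 1, Real.rpow_neg hx.le, ← div_eq_mul_inv, div_le_comm₀ ht (by positivity)]

lemma powerTailInv_eq_iff (hτ : 1 < τ) (hC : 0 < C) (ht : 0 < t) (hx : 0 < x) :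
    powerTailInv τ C t = x ↔ C * x ^ (1 - τ) = t := by
  rw [eq_iff_le_not_lt, eq_iff_le_not_lt, powerTailInv_le_iff hτ hC ht hx,
    powerTailInv_lt_iff hτ hC ht hx]

lemma powerTailInv_rpow_mul (hτ : 1 < τ) (hC : 0 < C) (ht : 0 < t) {s : ℝ} (hs : 0 < s) :
    powerTailInv τ C (s ^ (1 - τ) * t) = powerTailInv τ C t * s := by
  have hpos := powerTailInv_pos (τ := τ) hC ht
  have hinv := (powerTailInv_eq_iff hτ hC ht hpos).1 rfl
  rw [powerTailInv_eq_iff hτ hC (by positivity) (by positivity), Real.mul_rpow hpos.le hs.le,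
    ← mul_assoc, hinv, mul_comm]

lemma image_powerTail_Ioi (hτ : 1 < τ) (hC : 0 < C) :
    (fun x : ℝ ↦ C * x ^ (1 - τ)) '' Set.Ioi 0 = Set.Ioi 0 := by
  refine Set.Subset.antisymm (Set.image_subset_iff.2 fun x hx ↦ ?_) fun t ht ↦
    ⟨_, powerTailInv_pos hC ht, (powerTailInv_eq_iff hτ hC ht (powerTailInv_pos hC ht)).1 rfl⟩
  exact mul_pos hC (Real.rpow_pos_of_pos hx _)

lemma powerTailInv_powerTail (hτ : 1 < τ) (hC : 0 < C) (hx : 0 < x) :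
    powerTailInv τ C (C * x ^ (1 - τ)) = x :=
  (powerTailInv_eq_iff hτ hC (by positivity) hx).2 rfl

lemma injOn_powerTail (hτ : 1 < τ) (hC : 0 < C) :
    Set.InjOn (fun x : ℝ ↦ C * x ^ (1 - τ)) (Set.Ioi 0) :=
  Set.LeftInvOn.injOn fun _ ↦ powerTailInv_powerTail hτ hC

lemma hasDerivAt_powerTail (hx : x ∈ Set.Ioi (0 : ℝ)) :
    HasDerivAt (fun x : ℝ ↦ C * x ^ (1 - τ)) (C * (1 - τ) * x ^ (-τ)) x := by
  have := (Real.hasDerivAt_rpow_const (p := 1 - τ) (Or.inl (ne_of_gt hx))).const_mul C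
  rwa [← mul_assoc, show 1 - τ - 1 = -τ by ring] at this

variable [Fintype ι]

lemma prod_abs_deriv_powerTail_mul (hτ : 1 < τ) (hC : 0 < C) (f : (ι → ℝ) → ℝ) {y : ι → ℝ}
    (hy : y ∈ posOrthant ι) :
    (∏ i, |C * (1 - τ) * y i ^ (-τ)|) * f (fun i ↦ powerTailInv τ C (C * y i ^ (1 - τ))) =
      (C * (τ - 1)) ^ Fintype.card ι * ((∏ i, y i ^ (-τ)) * f y) := by
  have habs (i : ι) : |C * (1 - τ) * y i ^ (-τ)| = C * (τ - 1) * y i ^ (-τ) := by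
    rw [abs_mul, abs_mul, abs_of_pos hC, abs_sub_comm, abs_of_pos (sub_pos.2 hτ),
      abs_of_pos (Real.rpow_pos_of_pos (hy i) _)]
  rw [funext fun i ↦ powerTailInv_powerTail hτ hC (hy i), Finset.prod_congr rfl fun i _ ↦ habs i,
    Finset.prod_mul_distrib, Finset.prod_const, Finset.card_univ, mul_assoc]

lemma integral_comp_powerTailInv (hτ : 1 < τ) (hC : 0 < C) (f : (ι → ℝ) → ℝ) :
    ∫ t in posOrthant ι, f (fun i ↦ powerTailInv τ C (t i)) =
      (C * (τ - 1)) ^ Fintype.card ι * ∫ y in posOrthant ι, (∏ i, y i ^ (-τ)) * f y := by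
  rw [← integral_const_mul, ← setIntegral_congr_fun measurableSet_posOrthant
    fun y hy ↦ prod_abs_deriv_powerTail_mul hτ hC f hy]
  have hcov := integral_univ_pi_image measurableSet_Ioi
    (fun x ↦ hasDerivAt_powerTail (C := C) (τ := τ) (x := x)) (injOn_powerTail hτ hC)
    fun t : ι → ℝ ↦ f fun i ↦ powerTailInv τ C (t i)
  rwa [image_powerTail_Ioi hτ hC, ← posOrthant_eq_univ_pi] at hcov

lemma integrableOn_comp_powerTailInv_iff (hτ : 1 < τ) (hC : 0 < C) (f : (ι → ℝ) → ℝ) :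
    IntegrableOn (fun t ↦ f (fun i ↦ powerTailInv τ C (t i))) (posOrthant ι) ↔
      IntegrableOn (fun y ↦ (∏ i, y i ^ (-τ)) * f y) (posOrthant ι) := by
  have hcov := integrableOn_univ_pi_image_iff measurableSet_Ioi
    (fun x ↦ hasDerivAt_powerTail (C := C) (τ := τ) (x := x)) (injOn_powerTail hτ hC)
    fun t : ι → ℝ ↦ f fun i ↦ powerTailInv τ C (t i)
  rw [image_powerTail_Ioi hτ hC, ← posOrthant_eq_univ_pi] at hcov
  rw [hcov, integrableOn_congr_fun (fun y hy ↦ prod_abs_deriv_powerTail_mul hτ hC f hy)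
    measurableSet_posOrthant]
  have hne : (C * (τ - 1)) ^ Fintype.card ι ≠ 0 :=
    pow_ne_zero _ (mul_pos hC (sub_pos.2 hτ)).ne'
  exact integrable_const_mul_iff hne.isUnit _

end PowerTail

section TailQuantile

/-- The quantile function of a law `ν` on `ℝ`, as a function of the mass `u` of the upper tail. -/
def tailQuantile (ν : Measure ℝ) (u : ℝ) : ℝ := sInf {x | ν.real (Set.Ioi x) ≤ u}

lemma tendsto_measureReal_Ioi_mul_div {ν : Measure ℝ} {τ c : ℝ} (hc : c ≠ 0)
    (htail : Tendsto (fun x ↦ ν.real (Set.Ioi x) / (c * x ^ (1 - τ))) atTop (nhds 1)) {y : ℝ}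
    (hy : 0 < y) :
    Tendsto (fun s ↦ ν.real (Set.Ioi (y * s)) / s ^ (1 - τ)) atTop (nhds (c * y ^ (1 - τ))) := by
  have hlim := (htail.comp (tendsto_id.const_mul_atTop hy)).mul_const (c * y ^ (1 - τ))
  rw [one_mul] at hlim
  refine hlim.congr' ((eventually_gt_atTop 0).mono fun s hs ↦ ?_)
  have : 0 < y ^ (1 - τ) := by positivity
  simp only [Function.comp_apply, id_eq, Real.mul_rpow hy.le hs.le]
  field_simp

variable {ν : Measure ℝ} [IsProbabilityMeasure ν] {u x : ℝ}

lemma measureReal_Ioi_eq_one_sub_cdf : ν.real (Set.Ioi x) = 1 - ProbabilityTheory.cdf ν x := by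
  rw [ProbabilityTheory.cdf_eq_real, ← Set.compl_Iic, probReal_compl_eq_one_sub measurableSet_Iic]

lemma tailQuantile_le_iff (hu : u ∈ Set.Ioo (0 : ℝ) 1) :
    tailQuantile ν u ≤ x ↔ ν.real (Set.Ioi x) ≤ u := by
  have hmono {a b : ℝ} (hab : a ≤ b) : ν.real (Set.Ioi b) ≤ ν.real (Set.Ioi a) :=
    measureReal_mono (Set.Ioi_subset_Ioi hab)
  have hbdd : BddBelow {x | ν.real (Set.Ioi x) ≤ u} := by
    obtain ⟨b, hb⟩ := ((ProbabilityTheory.tendsto_cdf_atBot ν).eventually_lt_const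
      (sub_pos.2 hu.2)).exists
    refine ⟨b, fun y hy ↦ le_of_not_gt fun hyb ↦ ?_⟩
    have := (hmono hyb.le).trans hy
    rw [measureReal_Ioi_eq_one_sub_cdf] at this
    linarith
  have hne : {x | ν.real (Set.Ioi x) ≤ u}.Nonempty := by
    obtain ⟨b, hb⟩ := ((ProbabilityTheory.tendsto_cdf_atTop ν).eventually_const_lt
      (sub_lt_self 1 hu.1)).exists
    refine ⟨b, ?_⟩
    rw [Set.mem_ofPred_eq, measureReal_Ioi_eq_one_sub_cdf]
    linarith
  refine ⟨fun h ↦ (hmono h).trans ?_, csInf_le hbdd⟩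
  have hright : Tendsto (fun y ↦ ν.real (Set.Ioi y)) (nhdsWithin (tailQuantile ν u)
      (Set.Ioi (tailQuantile ν u))) (nhds (ν.real (Set.Ioi (tailQuantile ν u)))) := by
    simp_rw [measureReal_Ioi_eq_one_sub_cdf]
    exact ((ProbabilityTheory.cdf ν).right_continuous _).mono_left
      (nhdsWithin_mono _ Set.Ioi_subset_Ici_self) |>.const_sub 1
  refine le_of_tendsto hright (eventually_mem_nhdsWithin.mono fun y hy ↦ ?_)
  obtain ⟨z, hz, hzy⟩ := exists_lt_of_csInf_lt hne hy
  exact (hmono hzy.le).trans hz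

lemma tailQuantile_pos (hν : ∀ᵐ w ∂ν, 0 < w) (hu : u ∈ Set.Ioo (0 : ℝ) 1) :
    0 < tailQuantile ν u := by
  have hone : ν.real (Set.Ioi 0) = 1 := by
    rw [measureReal_def, (mem_ae_iff_prob_eq_one measurableSet_Ioi).1 hν, ENNReal.toReal_one]
  rw [← not_le, tailQuantile_le_iff hu, hone, not_le]
  exact hu.2

lemma antitoneOn_tailQuantile : AntitoneOn (tailQuantile ν) (Set.Ioo 0 1) :=
  fun _ ha _ hb hab ↦
    (tailQuantile_le_iff hb).2 (((tailQuantile_le_iff ha).1 le_rfl).trans hab)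

lemma aemeasurable_tailQuantile :
    AEMeasurable (tailQuantile ν) (volume.restrict (Set.Ioo 0 1)) :=
  aemeasurable_restrict_of_antitoneOn measurableSet_Ioo antitoneOn_tailQuantile

lemma map_tailQuantile : (volume.restrict (Set.Ioo 0 1)).map (tailQuantile ν) = ν := by
  have : IsProbabilityMeasure (volume.restrict (Set.Ioo (0 : ℝ) 1)) := ⟨by simp⟩
  have := Measure.isProbabilityMeasure_map (aemeasurable_tailQuantile (ν := ν))
  refine Measure.ext_of_Iic _ _ fun x ↦ ?_
  have hpreimage : tailQuantile ν ⁻¹' Set.Iic x ∩ Set.Ioo 0 1 =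
      Set.Ici (ν.real (Set.Ioi x)) ∩ Set.Ioo 0 1 :=
    Set.ext fun u ↦ and_congr_left tailQuantile_le_iff
  have hsup : Set.Ici (ν.real (Set.Ioi x)) ∩ Set.Ioo 0 1 ⊆ Set.Icc (ν.real (Set.Ioi x)) 1 :=
    fun u hu ↦ ⟨hu.1, hu.2.2.le⟩
  have hsub : Set.Ioo (ν.real (Set.Ioi x)) 1 ⊆ Set.Ici (ν.real (Set.Ioi x)) ∩ Set.Ioo 0 1 :=
    fun u hu ↦ ⟨hu.1.le, measureReal_nonneg.trans_lt hu.1, hu.2⟩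
  have hvol : volume (Set.Ici (ν.real (Set.Ioi x)) ∩ Set.Ioo 0 1) =
      ENNReal.ofReal (1 - ν.real (Set.Ioi x)) :=
    le_antisymm ((measure_mono hsup).trans_eq Real.volume_Icc)
      (Real.volume_Ioo.symm.trans_le (measure_mono hsub))
  rw [Measure.map_apply_of_aemeasurable aemeasurable_tailQuantile measurableSet_Iic,
    Measure.restrict_apply' measurableSet_Ioo, hpreimage, hvol, measureReal_Ioi_eq_one_sub_cdf,
    sub_sub_cancel, ProbabilityTheory.ofReal_cdf]

variable {τ c C t : ℝ}

lemma exists_measureReal_Ioi_le (hτ : 1 ≤ τ) (hc : 0 < c)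
    (htail : Tendsto (fun x ↦ ν.real (Set.Ioi x) / (c * x ^ (1 - τ))) atTop (nhds 1)) :
    ∃ C, 0 < C ∧ ∀ x, 0 < x → ν.real (Set.Ioi x) ≤ C * x ^ (1 - τ) := by
  obtain ⟨X, hX⟩ := eventually_atTop.1 (htail.eventually_lt_const one_lt_two)
  refine ⟨max (2 * c) (X ^ (τ - 1)), lt_max_of_lt_left (by positivity), fun x hx ↦ ?_⟩
  have hpow : 0 < x ^ (1 - τ) := Real.rpow_pos_of_pos hx _
  rcases le_or_gt X x with hXx | hxX
  · have hlarge := hX x hXx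
    rw [div_lt_iff₀ (by positivity), ← mul_assoc] at hlarge
    exact hlarge.le.trans (mul_le_mul_of_nonneg_right (le_max_left _ _) hpow.le)
  · calc
      ν.real (Set.Ioi x) ≤ 1 := measureReal_le_one
      _ = x ^ (τ - 1) * x ^ (1 - τ) := by rw [← Real.rpow_add hx]; simp
      _ ≤ X ^ (τ - 1) * x ^ (1 - τ) := by gcongr
      _ ≤ _ := mul_le_mul_of_nonneg_right (le_max_right _ _) hpow.le

lemma tailQuantile_le_powerTailInv (hτ : 1 < τ) (hC : 0 < C)
    (hbound : ∀ x, 0 < x → ν.real (Set.Ioi x) ≤ C * x ^ (1 - τ)) (hu : u ∈ Set.Ioo (0 : ℝ) 1) :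
    tailQuantile ν u ≤ powerTailInv τ C u :=
  have hpos := powerTailInv_pos (τ := τ) hC hu.1
  (tailQuantile_le_iff hu).2
    ((hbound _ hpos).trans_eq ((powerTailInv_eq_iff hτ hC hu.1 hpos).1 rfl))

lemma tendsto_rpow_one_sub_mul (hτ : 1 < τ) :
    Tendsto (fun s : ℝ ↦ s ^ (1 - τ) * t) atTop (nhds 0) := by
  simpa using (tendsto_rpow_neg_atTop (sub_pos.2 hτ)).mul_const t

lemma eventually_rpow_one_sub_mul_mem_Ioo (hτ : 1 < τ) (ht : 0 < t) :
    ∀ᶠ s : ℝ in atTop, s ^ (1 - τ) * t ∈ Set.Ioo (0 : ℝ) 1 := by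
  filter_upwards [(tendsto_rpow_one_sub_mul hτ).eventually_lt_const one_pos,
    eventually_gt_atTop 0] with s hlt hs
  exact ⟨by positivity, hlt⟩

lemma tendsto_tailQuantile_div (hτ : 1 < τ) (hc : 0 < c)
    (htail : Tendsto (fun x ↦ ν.real (Set.Ioi x) / (c * x ^ (1 - τ))) atTop (nhds 1))
    (ht : 0 < t) :
    Tendsto (fun s ↦ tailQuantile ν (s ^ (1 - τ) * t) / s) atTop (nhds (powerTailInv τ c t)) := by
  have hiff (y : ℝ) : ∀ᶠ s in atTop, tailQuantile ν (s ^ (1 - τ) * t) / s ≤ y ↔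
      ν.real (Set.Ioi (y * s)) / s ^ (1 - τ) ≤ t := by
    filter_upwards [eventually_rpow_one_sub_mul_mem_Ioo hτ ht, eventually_gt_atTop 0] with s hu hs
    rw [div_le_iff₀ hs, tailQuantile_le_iff hu, div_le_iff₀' (by positivity)]
  have hpos := powerTailInv_pos (τ := τ) hc ht
  refine tendsto_order.2 ⟨fun a ha ↦ ?_, fun b hb ↦ ?_⟩
  · obtain ⟨y, hay, hy⟩ := exists_between (max_lt ha hpos)
    have hy0 : 0 < y := (le_max_right _ _).trans_lt hay
    rw [← not_le, powerTailInv_le_iff hτ hc ht hy0, not_le] at hy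
    filter_upwards [hiff y, (tendsto_measureReal_Ioi_mul_div hc.ne' htail hy0).eventually_const_lt
      hy] with s hs hlt
    exact ((le_max_left _ _).trans_lt hay).trans (not_le.1 (mt hs.1 hlt.not_ge))
  · obtain ⟨y, hy, hyb⟩ := exists_between hb
    have hy0 : 0 < y := hpos.trans hy
    rw [powerTailInv_lt_iff hτ hc ht hy0] at hy
    filter_upwards [hiff y, (tendsto_measureReal_Ioi_mul_div hc.ne' htail hy0).eventually_lt_const
      hy] with s hs hlt
    exact (hs.2 hlt.le).trans_lt hyb

lemma integrable_id_of_powerTail (hτ : 2 < τ) (hc : 0 < c) (hpos : ∀ᵐ w ∂ν, 0 < w)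
    (htail : Tendsto (fun x ↦ ν.real (Set.Ioi x) / (c * x ^ (1 - τ))) atTop (nhds 1)) :
    Integrable id ν := by
  have hτ1 : 1 < τ := one_lt_two.trans hτ
  obtain ⟨C, hC, hbound⟩ := exists_measureReal_Ioi_le hτ1.le hc htail
  have hpow : IntegrableOn (powerTailInv τ C) (Set.Ioo 0 1) := by
    have hexp : -1 < -(τ - 1)⁻¹ := neg_lt_neg (inv_lt_one_of_one_lt₀ (by linarith))
    refine IntegrableOn.congr_fun (((intervalIntegral.integrableOn_Ioo_rpow_iff one_pos).2
      hexp).const_mul (C ^ (τ - 1)⁻¹)) (fun u hu ↦ ?_) measurableSet_Ioo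
    rw [powerTailInv, Real.div_rpow hC.le hu.1.le, Real.rpow_neg hu.1.le, div_eq_mul_inv]
  rw [← map_tailQuantile (ν := ν), integrable_map_measure aestronglyMeasurable_id
    aemeasurable_tailQuantile]
  refine hpow.mono' aemeasurable_tailQuantile.aestronglyMeasurable
    ((ae_restrict_mem measurableSet_Ioo).mono fun u hu ↦ ?_)
  rw [Function.comp_apply, id_eq, Real.norm_of_nonneg (tailQuantile_pos hpos hu).le]
  exact tailQuantile_le_powerTailInv hτ1 hC hbound hu

end TailQuantile

/-! ### Expectations under product laws with power tails -/

section RegularVariation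

variable {ι : Type*} {ν : Measure ℝ} [IsProbabilityMeasure ν] {τ c : ℝ}

/-- The integrand `f (W / s)` after the weights `W` have been written as the quantiles of
independent uniform variables `u` in `(0, 1)`, in the scale `u = s ^ (1 - τ) • t`. -/
def rescaledIntegrand (ν : Measure ℝ) (τ : ℝ) (f : (ι → ℝ) → ℝ) (s : ℝ) (t : ι → ℝ) : ℝ :=
  (Set.univ.pi fun _ ↦ Set.Ioo 0 1).indicator (fun u ↦ f fun i ↦ tailQuantile ν (u i) / s)
    (s ^ (1 - τ) • t)

lemma norm_rescaledIntegrand_le (hτ : 1 < τ) (hpos : ∀ᵐ w ∂ν, 0 < w) {C : ℝ} (hC : 0 < C)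
    (hbound : ∀ x, 0 < x → ν.real (Set.Ioi x) ≤ C * x ^ (1 - τ)) {f g : (ι → ℝ) → ℝ}
    (hfg : ∀ y ∈ posOrthant ι, ‖f y‖ ≤ g y) (hg : MonotoneOn g (posOrthant ι)) {s : ℝ}
    (hs : 0 < s) {t : ι → ℝ} (ht : t ∈ posOrthant ι) :
    ‖rescaledIntegrand ν τ f s t‖ ≤ g fun i ↦ powerTailInv τ C (t i) := by
  have horth : (fun i ↦ powerTailInv τ C (t i)) ∈ posOrthant ι :=
    fun i ↦ powerTailInv_pos hC (ht i)
  unfold rescaledIntegrand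
  by_cases hmem : s ^ (1 - τ) • t ∈ Set.univ.pi fun _ ↦ Set.Ioo (0 : ℝ) 1
  · have hquant : (fun i ↦ tailQuantile ν ((s ^ (1 - τ) • t) i) / s) ∈ posOrthant ι :=
      fun i ↦ div_pos (tailQuantile_pos hpos (hmem i trivial)) hs
    rw [Set.indicator_of_mem hmem]
    refine (hfg _ hquant).trans (hg hquant horth fun i ↦ ?_)
    rw [div_le_iff₀ hs, ← powerTailInv_rpow_mul hτ hC (ht i) hs]
    exact tailQuantile_le_powerTailInv hτ hC hbound (hmem i trivial)
  · rw [Set.indicator_of_notMem hmem, norm_zero]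
    exact (norm_nonneg _).trans (hfg _ horth)

lemma tendsto_rescaledIntegrand [Finite ι] (hτ : 1 < τ) (hc : 0 < c) (hpos : ∀ᵐ w ∂ν, 0 < w)
    (htail : Tendsto (fun x ↦ ν.real (Set.Ioi x) / (c * x ^ (1 - τ))) atTop (nhds 1))
    {f : (ι → ℝ) → ℝ} (hf : ContinuousOn f (posOrthant ι)) {t : ι → ℝ} (ht : t ∈ posOrthant ι) :
    Tendsto (fun s ↦ rescaledIntegrand ν τ f s t) atTop
      (nhds (f fun i ↦ powerTailInv τ c (t i))) := by
  have hmem : ∀ᶠ s : ℝ in atTop, s ^ (1 - τ) • t ∈ Set.univ.pi fun _ ↦ Set.Ioo (0 : ℝ) 1 := by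
    simp_rw [Set.mem_univ_pi]
    exact eventually_all.2 fun i ↦ eventually_rpow_one_sub_mul_mem_Ioo hτ (ht i)
  have horth : ∀ᶠ s in atTop, (fun i ↦ tailQuantile ν ((s ^ (1 - τ) • t) i) / s) ∈
      posOrthant ι := by
    filter_upwards [hmem, eventually_gt_atTop 0] with s hu hs i
    exact div_pos (tailQuantile_pos hpos (hu i trivial)) hs
  have hlim : Tendsto (fun s i ↦ tailQuantile ν ((s ^ (1 - τ) • t) i) / s) atTop
      (nhds fun i ↦ powerTailInv τ c (t i)) :=
    tendsto_pi_nhds.2 fun i ↦ tendsto_tailQuantile_div hτ hc htail (ht i)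
  refine ((hf _ fun i ↦ powerTailInv_pos hc (ht i)).tendsto.comp
    (tendsto_nhdsWithin_iff.2 ⟨hlim, horth⟩)).congr' (hmem.mono fun s hu ↦ ?_)
  exact (Set.indicator_of_mem hu fun u : ι → ℝ ↦ f fun i ↦ tailQuantile ν (u i) / s).symm

variable [Fintype ι]

lemma aemeasurable_tailQuantile_pi :
    AEMeasurable (fun (u : ι → ℝ) i ↦ tailQuantile ν (u i))
      (volume.restrict (Set.univ.pi fun _ ↦ Set.Ioo 0 1)) := by
  rw [volume_pi, Measure.restrict_pi_pi]
  exact aemeasurable_pi_lambda _ fun i ↦ aemeasurable_tailQuantile.comp_quasiMeasurePreserving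
    (Measure.quasiMeasurePreserving_eval _ i)

lemma map_tailQuantile_pi :
    (volume.restrict (Set.univ.pi fun _ : ι ↦ Set.Ioo (0 : ℝ) 1)).map
      (fun u i ↦ tailQuantile ν (u i)) = Measure.pi fun _ ↦ ν := by
  have (_ : ι) : SigmaFinite ((volume.restrict (Set.Ioo 0 1)).map (tailQuantile ν)) := by
    rw [map_tailQuantile]; infer_instance
  rw [volume_pi, Measure.restrict_pi_pi,
    Measure.pi_map_pi (f := fun _ ↦ tailQuantile ν) fun _ ↦ aemeasurable_tailQuantile]
  simp_rw [map_tailQuantile]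

lemma integral_pi_div_eq_rescaledIntegrand {f : (ι → ℝ) → ℝ} (hf : StronglyMeasurable f)
    {s : ℝ} (hs : 0 < s) :
    ∫ w, f (fun i ↦ w i / s) ∂(Measure.pi fun _ ↦ ν) =
      (s ^ (1 - τ)) ^ Fintype.card ι * ∫ t in posOrthant ι, rescaledIntegrand ν τ f s t := by
  have hR : 0 < s ^ (1 - τ) := Real.rpow_pos_of_pos hs _
  have hcube : MeasurableSet (Set.univ.pi fun _ : ι ↦ Set.Ioo (0 : ℝ) 1) :=
    MeasurableSet.univ_pi fun _ ↦ measurableSet_Ioo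
  have hvanish (t : ι → ℝ) (ht : t ∉ posOrthant ι) : rescaledIntegrand ν τ f s t = 0 :=
    Set.indicator_of_notMem (fun h ↦ ht fun i ↦ pos_of_mul_pos_right (h i trivial).1 hR.le) _
  have hdiv : StronglyMeasurable fun w : ι → ℝ ↦ f fun i ↦ w i / s :=
    hf.comp_measurable (by fun_prop)
  rw [← map_tailQuantile_pi, integral_map aemeasurable_tailQuantile_pi
    hdiv.aestronglyMeasurable, ← integral_indicator hcube,
    setIntegral_eq_integral_of_forall_compl_eq_zero hvanish]
  unfold rescaledIntegrand
  rw [Measure.integral_comp_smul, Module.finrank_pi, abs_of_pos (by positivity), smul_eq_mul,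
    mul_inv_cancel_left₀ (by positivity)]

lemma aestronglyMeasurable_rescaledIntegrand {f : (ι → ℝ) → ℝ} (hf : StronglyMeasurable f)
    {s : ℝ} (hs : 0 < s) : AEStronglyMeasurable (rescaledIntegrand ν τ f s) := by
  have hcube : MeasurableSet (Set.univ.pi fun _ : ι ↦ Set.Ioo (0 : ℝ) 1) :=
    MeasurableSet.univ_pi fun _ ↦ measurableSet_Ioo
  have hdiv : StronglyMeasurable fun w : ι → ℝ ↦ f fun i ↦ w i / s :=
    hf.comp_measurable (by fun_prop)
  exact ((aestronglyMeasurable_indicator_iff hcube).2 (hdiv.aestronglyMeasurable.comp_aemeasurable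
    aemeasurable_tailQuantile_pi)).comp_quasiMeasurePreserving
      (Measure.quasiMeasurePreserving_smul _ (Real.rpow_pos_of_pos hs _).ne')

theorem tendsto_integral_pi_div_of_powerTail (hτ : 1 < τ) (hc : 0 < c) (hpos : ∀ᵐ w ∂ν, 0 < w)
    (htail : Tendsto (fun x ↦ ν.real (Set.Ioi x) / (c * x ^ (1 - τ))) atTop (nhds 1))
    {f g : (ι → ℝ) → ℝ} (hmeas : StronglyMeasurable f) (hcont : ContinuousOn f (posOrthant ι))
    (hfg : ∀ y ∈ posOrthant ι, ‖f y‖ ≤ g y) (hmono : MonotoneOn g (posOrthant ι))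
    (hint : IntegrableOn (fun y ↦ (∏ i, y i ^ (-τ)) * g y) (posOrthant ι)) :
    Tendsto (fun s ↦ (∫ w, f (fun i ↦ w i / s) ∂(Measure.pi fun _ ↦ ν)) /
        (s ^ (1 - τ)) ^ Fintype.card ι) atTop
      (nhds ((c * (τ - 1)) ^ Fintype.card ι *
        ∫ y in posOrthant ι, (∏ i, y i ^ (-τ)) * f y)) := by
  obtain ⟨C, hC, hbound⟩ := exists_measureReal_Ioi_le hτ.le hc htail
  have horth : ∀ᵐ t ∂volume.restrict (posOrthant ι), t ∈ posOrthant ι :=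
    ae_restrict_mem measurableSet_posOrthant
  have hlim : Tendsto (fun s ↦ ∫ t in posOrthant ι, rescaledIntegrand ν τ f s t) atTop
      (nhds (∫ t in posOrthant ι, f fun i ↦ powerTailInv τ c (t i))) :=
    tendsto_integral_filter_of_dominated_convergence
      (fun t ↦ g fun i ↦ powerTailInv τ C (t i))
      ((eventually_gt_atTop 0).mono fun _ hs ↦
        (aestronglyMeasurable_rescaledIntegrand hmeas hs).restrict)
      ((eventually_gt_atTop 0).mono fun _ hs ↦ horth.mono fun _ ↦
        norm_rescaledIntegrand_le hτ hpos hC hbound hfg hmono hs)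
      ((integrableOn_comp_powerTailInv_iff hτ hC g).2 hint)
      (horth.mono fun _ ↦ tendsto_rescaledIntegrand hτ hc hpos htail hcont)
  rw [← integral_comp_powerTailInv hτ hc]
  refine hlim.congr' ((eventually_gt_atTop 0).mono fun s hs ↦ ?_)
  dsimp only
  rw [integral_pi_div_eq_rescaledIntegrand hmeas hs, mul_div_cancel_left₀ _ (by positivity)]

end RegularVariation

section WeightTail

variable {τ c : ℝ} {μW : Measure ℝ}

lemma WeightTail.ae_one_le (hW : WeightTail τ c μW) : ∀ᵐ w ∂μW, 1 ≤ w :=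
  measure_mono_null (fun w (hw : ¬1 ≤ w) ↦ not_le.1 hw) hW.2.1

lemma WeightTail.ae_pos (hW : WeightTail τ c μW) : ∀ᵐ w ∂μW, 0 < w :=
  hW.ae_one_le.mono fun _ ↦ one_pos.trans_le

lemma WeightTail.wMean_pos [IsProbabilityMeasure μW] (hτ : 2 < τ) (hW : WeightTail τ c μW) :
    0 < wMean μW :=
  calc
    0 < ∫ _, (1 : ℝ) ∂μW := by simp
    _ ≤ wMean μW := integral_mono_ae (integrable_const _)
      (integrable_id_of_powerTail hτ hW.1 hW.ae_pos hW.2.2) hW.ae_one_le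

end WeightTail

/-! ### Convergence of the rescaled expectation -/

section Convergence

/-- The limiting integral of `E[N^⋆(H)]`, without its proportionality constant. -/
def starInt (s : StarKind) (τ γ μ : ℝ) (d : ℕ) {k : ℕ} (H : SimpleGraph (Fin k)) : ℝ :=
  match s with
  | .sub => IsubInt τ γ μ d H
  | .ind => IindInt τ γ μ d H

variable {s : StarKind} {k d : ℕ} {H : SimpleGraph (Fin k)} {γ μ τ : ℝ}

lemma prod_filter_lt_eq_prod_vertexPair (f : Fin k × Fin k → ℝ) :
    ∏ p with p.1 < p.2, f p = ∏ p : VertexPair k, f p :=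
  Finset.prod_subtype _ (by simp) f

open scoped Classical in
lemma patternKernel_sub_eq_prod_filter (y : Fin k → ℝ) (x : Fin k → Torus d) :
    patternKernel .sub H γ μ d y x =
      ∏ p : Fin k × Fin k with p.1 < p.2 ∧ H.Adj p.1 p.2,
        connKernel γ μ d (y p.1 * y p.2) (dist (x p.1) (x p.2)) := by
  rw [← Finset.filter_filter, Finset.prod_filter, prod_filter_lt_eq_prod_vertexPair]
  rfl

open scoped Classical in
lemma patternKernel_ind_eq_prod_filter (y : Fin k → ℝ) (x : Fin k → Torus d) :
    patternKernel .ind H γ μ d y x =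
      (∏ p : Fin k × Fin k with p.1 < p.2 ∧ H.Adj p.1 p.2,
        connKernel γ μ d (y p.1 * y p.2) (dist (x p.1) (x p.2))) *
      ∏ p : Fin k × Fin k with p.1 < p.2 ∧ ¬H.Adj p.1 p.2,
        (1 - connKernel γ μ d (y p.1 * y p.2) (dist (x p.1) (x p.2))) := by
  rw [← Finset.filter_filter, ← Finset.filter_filter, ← Finset.prod_ite,
    prod_filter_lt_eq_prod_vertexPair]
  rfl

lemma starInt_eq_integral_positionIntegral :
    starInt s τ γ μ d H =
      ∫ y in posOrthant (Fin k), (∏ i, y i ^ (-τ)) * positionIntegral s H γ μ d y := by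
  cases s
  · simp_rw [positionIntegral, patternKernel_ind_eq_prod_filter]; rfl
  · simp_rw [positionIntegral, patternKernel_sub_eq_prod_filter]; rfl

lemma connKernel_mono (hγ : 0 ≤ γ) (hμ : 0 ≤ μ) {a b r : ℝ} (ha : 0 ≤ a) (hab : a ≤ b)
    (hr : 0 ≤ r) : connKernel γ μ d a r ≤ connKernel γ μ d b r :=
  Real.rpow_le_rpow (by positivity) (min_le_min_right _ (by gcongr)) hγ

lemma pairFactor_mem_Icc {adj : Prop} {q : ℝ} (hq : q ∈ Set.Icc (0 : ℝ) 1) :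
    pairFactor s adj q ∈ Set.Icc (0 : ℝ) 1 := by
  unfold pairFactor
  split_ifs
  · exact hq
  · cases s
    exacts [⟨sub_nonneg.2 hq.2, sub_le_self _ hq.1⟩, ⟨zero_le_one, le_rfl⟩]

lemma pairFactor_le_sub {adj : Prop} {q : ℝ} (hq : 0 ≤ q) :
    pairFactor s adj q ≤ pairFactor .sub adj q := by
  unfold pairFactor
  split_ifs
  · exact le_rfl
  · cases s
    exacts [sub_le_self _ hq, le_rfl]

lemma continuous_pairFactor (adj : Prop) : Continuous (pairFactor s adj) := by
  unfold pairFactor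
  split_ifs
  · fun_prop
  · cases s <;> fun_prop

variable {x : Fin k → Torus d} {y : Fin k → ℝ}

lemma connKernel_mem_Icc (hγ : 0 ≤ γ) (hμ : 0 ≤ μ) (hy : y ∈ posOrthant (Fin k)) (i j : Fin k) :
    connKernel γ μ d (y i * y j) (dist (x i) (x j)) ∈ Set.Icc (0 : ℝ) 1 :=
  have hprod : 0 ≤ y i * y j := (mul_pos (hy i) (hy j)).le
  ⟨connKernel_nonneg hμ hprod dist_nonneg, connKernel_le_one hγ hμ hprod dist_nonneg⟩

lemma patternKernel_mem_Icc (hγ : 0 ≤ γ) (hμ : 0 ≤ μ) (hy : y ∈ posOrthant (Fin k)) :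
    patternKernel s H γ μ d y x ∈ Set.Icc (0 : ℝ) 1 :=
  ⟨Finset.prod_nonneg fun _ _ ↦ (pairFactor_mem_Icc (connKernel_mem_Icc hγ hμ hy _ _)).1,
    Finset.prod_le_one (fun _ _ ↦ (pairFactor_mem_Icc (connKernel_mem_Icc hγ hμ hy _ _)).1)
      fun _ _ ↦ (pairFactor_mem_Icc (connKernel_mem_Icc hγ hμ hy _ _)).2⟩

lemma patternKernel_le_sub (hγ : 0 ≤ γ) (hμ : 0 ≤ μ) (hy : y ∈ posOrthant (Fin k)) :
    patternKernel s H γ μ d y x ≤ patternKernel .sub H γ μ d y x :=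
  Finset.prod_le_prod (fun _ _ ↦ (pairFactor_mem_Icc (connKernel_mem_Icc hγ hμ hy _ _)).1)
    fun _ _ ↦ pairFactor_le_sub (connKernel_mem_Icc hγ hμ hy _ _).1

lemma patternKernel_sub_mono (hγ : 0 ≤ γ) (hμ : 0 ≤ μ) {z : Fin k → ℝ}
    (hy : y ∈ posOrthant (Fin k)) (hyz : y ≤ z) :
    patternKernel .sub H γ μ d y x ≤ patternKernel .sub H γ μ d z x := by
  refine Finset.prod_le_prod
    (fun _ _ ↦ (pairFactor_mem_Icc (connKernel_mem_Icc hγ hμ hy _ _)).1) fun p _ ↦ ?_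
  unfold pairFactor
  split_ifs
  · exact connKernel_mono hγ hμ (mul_pos (hy _) (hy _)).le
      (mul_le_mul (hyz _) (hyz _) (hy _).le ((hy _).le.trans (hyz _))) dist_nonneg
  · exact le_rfl

lemma continuous_patternKernel (hγ : 0 ≤ γ) (x : Fin k → Torus d) :
    Continuous fun y ↦ patternKernel s H γ μ d y x := by
  refine continuous_finsetProd _ fun p _ ↦ (continuous_pairFactor _).comp ?_
  unfold connKernel
  exact Continuous.rpow_const (by fun_prop) fun _ ↦ Or.inr hγ

lemma integrable_patternKernel (hγ : 0 ≤ γ) (hμ : 0 ≤ μ) (hy : y ∈ posOrthant (Fin k)) :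
    Integrable (patternKernel s H γ μ d y)
      (Measure.pi fun _ ↦ (volume : Measure (Torus d))) :=
  .of_mem_Icc 0 1 (measurable_patternKernel.of_uncurry_left).aemeasurable
    (ae_of_all _ fun _ ↦ patternKernel_mem_Icc hγ hμ hy)

lemma positionIntegral_nonneg (hγ : 0 ≤ γ) (hμ : 0 ≤ μ) (hy : y ∈ posOrthant (Fin k)) :
    0 ≤ positionIntegral s H γ μ d y :=
  integral_nonneg fun _ ↦ (patternKernel_mem_Icc hγ hμ hy).1

lemma positionIntegral_le_sub (hγ : 0 ≤ γ) (hμ : 0 ≤ μ) (hy : y ∈ posOrthant (Fin k)) :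
    positionIntegral s H γ μ d y ≤ positionIntegral .sub H γ μ d y :=
  integral_mono (integrable_patternKernel hγ hμ hy) (integrable_patternKernel hγ hμ hy)
    fun _ ↦ patternKernel_le_sub hγ hμ hy

lemma monotoneOn_positionIntegral_sub (hγ : 0 ≤ γ) (hμ : 0 ≤ μ) :
    MonotoneOn (positionIntegral .sub H γ μ d) (posOrthant (Fin k)) :=
  fun _ hy _ hz hyz ↦ integral_mono (integrable_patternKernel hγ hμ hy)
    (integrable_patternKernel hγ hμ hz) fun _ ↦ patternKernel_sub_mono hγ hμ hy hyz

lemma continuousOn_positionIntegral (hγ : 0 ≤ γ) (hμ : 0 ≤ μ) :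
    ContinuousOn (positionIntegral s H γ μ d) (posOrthant (Fin k)) := by
  refine continuousOn_of_dominated (bound := fun _ ↦ 1)
    (fun y _ ↦ (measurable_patternKernel.of_uncurry_left).aestronglyMeasurable)
    (fun y hy ↦ ae_of_all _ fun x ↦ ?_) (integrable_const _)
    (ae_of_all _ fun x ↦ (continuous_patternKernel hγ x).continuousOn)
  have hmem := patternKernel_mem_Icc (s := s) (H := H) (d := d) (x := x) hγ hμ hy
  rw [Real.norm_of_nonneg hmem.1]
  exact hmem.2

lemma integrableOn_prod_rpow_mul_positionIntegral (hγ : 0 ≤ γ) (hμ : 0 ≤ μ)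
    (hint : IntegrableOn (fun y ↦ (∏ i, y i ^ (-τ)) * positionIntegral .sub H γ μ d y)
      (posOrthant (Fin k))) :
    IntegrableOn (fun y ↦ (∏ i, y i ^ (-τ)) * positionIntegral s H γ μ d y)
      (posOrthant (Fin k)) := by
  have hmeas : Measurable fun y : Fin k → ℝ ↦ ∏ i, y i ^ (-τ) := by fun_prop
  refine hint.mono'
    (hmeas.aestronglyMeasurable.mul stronglyMeasurable_positionIntegral.aestronglyMeasurable)
    ((ae_restrict_mem measurableSet_posOrthant).mono fun y hy ↦ ?_)
  have hweight : 0 ≤ ∏ i, y i ^ (-τ) :=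
    Finset.prod_nonneg fun i _ ↦ Real.rpow_nonneg (hy i).le _
  rw [Real.norm_of_nonneg (mul_nonneg hweight (positionIntegral_nonneg hγ hμ hy))]
  exact mul_le_mul_of_nonneg_left (positionIntegral_le_sub hγ hμ hy) hweight

lemma rpow_mul_three_sub_div_two (k : ℕ) (τ : ℝ) {n : ℝ} (hn : 0 < n) :
    n ^ (k * (3 - τ) / 2) = n ^ k * (√n ^ (1 - τ)) ^ k := by
  rw [Real.sqrt_eq_rpow, ← Real.rpow_mul hn.le, ← Real.rpow_mul_natCast hn.le,
    ← Real.rpow_natCast, ← Real.rpow_add hn]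
  ring_nf

theorem tendsto_integral_starNTotal_div (hτ : 1 < τ) (hγ : 0 ≤ γ) (hμ : 0 ≤ μ) {c : ℝ}
    {μW : Measure ℝ} [IsProbabilityMeasure μW] (hW : WeightTail τ c μW)
    (hint : IntegrableOn (fun y ↦ (∏ i, y i ^ (-τ)) * positionIntegral .sub H γ μ d y)
      (posOrthant (Fin k))) :
    Tendsto (fun n : ℕ ↦ (∫ ω, (starNTotal s H γ μ d n ω : ℝ) ∂(girgMeasure μW d n)) /
        (n : ℝ) ^ ((k : ℝ) * (3 - τ) / 2)) atTop
      (nhds ((c * (τ - 1)) ^ k * starInt s τ γ μ d H)) := by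
  have hpos : ∀ᵐ w ∂μW, 0 < w := hW.ae_pos
  have hcount : Tendsto (fun n : ℕ ↦ (n.descFactorial k : ℝ) / (n : ℝ) ^ k) atTop (nhds 1) :=
    (Asymptotics.isEquivalent_iff_tendsto_one ((eventually_gt_atTop 0).mono fun n hn ↦ by
      positivity)).1 (isEquivalent_descFactorial k)
  have hscale := (tendsto_integral_pi_div_of_powerTail hτ hW.1 hpos hW.2.2
    stronglyMeasurable_positionIntegral (continuousOn_positionIntegral (s := s) (H := H)
      (d := d) hγ hμ)
    (fun y hy ↦ (Real.norm_of_nonneg (positionIntegral_nonneg hγ hμ hy)).trans_le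
      (positionIntegral_le_sub hγ hμ hy)) (monotoneOn_positionIntegral_sub hγ hμ) hint).comp
    (Real.tendsto_sqrt_atTop.comp tendsto_natCast_atTop_atTop)
  rw [Fintype.card_fin, ← starInt_eq_integral_positionIntegral] at hscale
  have hlim := hcount.mul hscale
  rw [one_mul] at hlim
  refine hlim.congr' ((eventually_gt_atTop 0).mono fun n hn ↦ ?_)
  dsimp only
  rw [integral_starNTotal hγ hμ (hpos.mono fun _ ↦ le_of_lt),
    rpow_mul_three_sub_div_two _ _ (Nat.cast_pos.2 hn), mul_div_mul_comm]
  rfl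

end Convergence

/-! ### Integrability of the limit integrand -/

section ConnectionKernelIntegral

variable {γ μ a : ℝ} {d : ℕ}

lemma min_div_one_le {r : ℝ} (ha : 0 < a) (hr : 0 ≤ r) : min (a / r) 1 ≤ 2 / (1 + r / a) := by
  rw [show 2 / (1 + r / a) = 2 * a / (a + r) by field_simp]
  rcases le_total r a with hra | har
  · refine (min_le_right _ _).trans ?_
    rw [le_div_iff₀ (by positivity)]
    linarith
  · refine (min_le_left _ _).trans ?_
    rw [div_le_div_iff₀ (ha.trans_le har) (by positivity)]
    nlinarith

lemma exists_integral_addCircle_le (hγ : 1 < γ) :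
    ∃ C, 0 < C ∧ ∀ a, 0 < a → ∫ z : AddCircle (1 : ℝ), (2 / (1 + ‖z‖ / a)) ^ γ ≤ C * a := by
  set g : ℝ → ℝ := fun t ↦ 2 ^ γ * (1 + ‖t‖) ^ (-γ)
  have hg : Integrable g := (integrable_one_add_norm (by simpa using hγ)).const_mul _
  have hg0 : ∀ t, 0 ≤ g t := fun t ↦ by positivity
  refine ⟨(∫ t, g t) + 1, by linarith [integral_nonneg (μ := volume) (f := g) hg0], fun a ha ↦ ?_⟩
  calc ∫ z : AddCircle (1 : ℝ), (2 / (1 + ‖z‖ / a)) ^ γ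
      = ∫ t in Set.Ioc (-(1 / 2) : ℝ) (-(1 / 2) + 1), g (t / a) := by
        rw [← AddCircle.integral_preimage 1 (-(1 / 2))]
        refine setIntegral_congr_fun measurableSet_Ioc fun t ht ↦ ?_
        have hnorm : ‖(t : AddCircle (1 : ℝ))‖ = |t| := by
          rw [AddCircle.norm_coe_eq_abs_iff _ one_ne_zero, abs_one, abs_le]
          constructor <;> linarith [ht.1, ht.2]
        simp only [g]
        rw [hnorm, Real.div_rpow zero_le_two (by positivity), Real.rpow_neg (by positivity),
          Real.norm_eq_abs, abs_div, abs_of_pos ha, div_eq_mul_inv]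
    _ ≤ ∫ t, g (t / a) :=
        setIntegral_le_integral (hg.comp_div ha.ne') (ae_of_all _ fun t ↦ hg0 _)
    _ = a * ∫ t, g t := by rw [Measure.integral_comp_div g, abs_of_pos ha, smul_eq_mul]
    _ ≤ ((∫ t, g t) + 1) * a := by linarith

lemma connKernel_norm_le_prod (hγ : 0 ≤ γ) (hμ : 0 < μ) (ha : 0 < a) (z : Torus d) :
    connKernel γ μ d (μ * a ^ d) ‖z‖ ≤ ∏ j, (2 / (1 + ‖z j‖ / a)) ^ γ := by
  rw [Real.finsetProd_rpow _ _ fun j _ ↦ by positivity]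
  refine Real.rpow_le_rpow (by positivity) ?_ hγ
  calc min (μ * a ^ d / (μ * ‖z‖ ^ d)) 1
      ≤ min (a / ‖z‖) 1 ^ d := by
        rw [mul_div_mul_left _ _ hμ.ne', ← div_pow]
        rcases le_total (a / ‖z‖) 1 with h | h
        · rw [min_eq_left h]
          exact min_le_left _ _
        · rw [min_eq_right h, one_pow]
          exact min_le_right _ _
    _ = ∏ _j : Fin d, min (a / ‖z‖) 1 := by simp
    _ ≤ ∏ j, 2 / (1 + ‖z j‖ / a) := by
        refine Finset.prod_le_prod (fun _ _ ↦ by positivity) fun j _ ↦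
          (min_div_one_le ha (norm_nonneg z)).trans ?_
        have := norm_le_pi_norm z j
        gcongr

lemma integrable_connKernel_norm (hγ : 0 ≤ γ) (hμ : 0 ≤ μ) {y : ℝ} (hy : 0 ≤ y) :
    Integrable fun z : Torus d ↦ connKernel γ μ d y ‖z‖ :=
  .of_mem_Icc 0 1 (by unfold connKernel; fun_prop) (ae_of_all _ fun z ↦
    ⟨connKernel_nonneg hμ hy (norm_nonneg z), connKernel_le_one hγ hμ hy (norm_nonneg z)⟩)

lemma integrable_two_div_one_add_norm_rpow (hγ : 0 ≤ γ) (ha : 0 < a) :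
    Integrable fun z : AddCircle (1 : ℝ) ↦ (2 / (1 + ‖z‖ / a)) ^ γ := by
  refine .of_mem_Icc 0 (2 ^ γ) (by fun_prop) (ae_of_all _ fun z ↦ ⟨by positivity, ?_⟩)
  exact Real.rpow_le_rpow (by positivity)
    (div_le_self zero_le_two (le_add_of_nonneg_right (by positivity))) hγ

lemma integral_connKernel_norm_le_pow (hγ : 0 ≤ γ) (hμ : 0 < μ) (ha : 0 < a) :
    ∫ z : Torus d, connKernel γ μ d (μ * a ^ d) ‖z‖ ≤
      (∫ z : AddCircle (1 : ℝ), (2 / (1 + ‖z‖ / a)) ^ γ) ^ d := by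
  have hprod := integral_fintype_prod_volume_eq_pow (ι := Fin d)
    fun z : AddCircle (1 : ℝ) ↦ (2 / (1 + ‖z‖ / a)) ^ γ
  rw [Fintype.card_fin] at hprod
  rw [← hprod]
  exact integral_mono (integrable_connKernel_norm hγ hμ.le (by positivity))
    (Integrable.fintype_prod fun _ ↦ integrable_two_div_one_add_norm_rpow hγ ha)
    (connKernel_norm_le_prod hγ hμ ha)

lemma exists_integral_connKernel_norm_le (hγ : 1 < γ) (hμ : 0 < μ) (hd : d ≠ 0) :
    ∃ C, 0 < C ∧ ∀ y, 0 < y → ∫ z : Torus d, connKernel γ μ d y ‖z‖ ≤ C * min 1 y := by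
  obtain ⟨C, hC, hcircle⟩ := exists_integral_addCircle_le hγ
  have hγ0 : 0 ≤ γ := zero_le_one.trans hγ.le
  refine ⟨max 1 (C ^ d / μ), by positivity, fun y hy ↦ ?_⟩
  have hone : ∫ z : Torus d, connKernel γ μ d y ‖z‖ ≤ 1 := by
    simpa using integral_mono (integrable_connKernel_norm hγ0 hμ.le hy.le) (integrable_const 1)
      fun z : Torus d ↦ connKernel_le_one hγ0 hμ.le hy.le (norm_nonneg z)
  have hlinear : ∫ z : Torus d, connKernel γ μ d y ‖z‖ ≤ C ^ d / μ * y := by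
    obtain ⟨a, ha, hay⟩ : ∃ a, 0 < a ∧ a ^ d = y / μ :=
      ⟨(y / μ) ^ (d⁻¹ : ℝ), by positivity, Real.rpow_inv_natCast_pow (by positivity) hd⟩
    obtain rfl : y = μ * a ^ d := by rw [hay, mul_div_cancel₀ _ hμ.ne']
    calc ∫ z : Torus d, connKernel γ μ d (μ * a ^ d) ‖z‖
        ≤ (∫ z : AddCircle (1 : ℝ), (2 / (1 + ‖z‖ / a)) ^ γ) ^ d :=
          integral_connKernel_norm_le_pow hγ0 hμ ha
      _ ≤ (C * a) ^ d :=
          pow_le_pow_left₀ (integral_nonneg fun z ↦ by positivity) (hcircle a ha) d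
      _ = C ^ d / μ * (μ * a ^ d) := by rw [mul_pow]; field_simp
  rcases le_total 1 y with hy1 | hy1
  · rw [min_eq_left hy1, mul_one]
    exact hone.trans (le_max_left _ _)
  · rw [min_eq_right hy1]
    exact hlinear.trans (mul_le_mul_of_nonneg_right (le_max_right _ _) hy.le)

end ConnectionKernelIntegral

section HamiltonianCycle

section PathIntegral

variable {X : Type*} [AddGroup X] [MeasurableSpace X] [MeasurableAdd₂ X] [MeasurableSub₂ X]
  (ν : Measure X) [IsProbabilityMeasure ν] [ν.IsAddRightInvariant] {m : ℕ}

lemma lintegral_prod_sub_succ {f : Fin m → X → ENNReal} (hf : ∀ i, Measurable (f i)) :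
    ∫⁻ x : Fin (m + 1) → X, ∏ i, f i (x i.castSucc - x i.succ) ∂(Measure.pi fun _ ↦ ν) =
      ∏ i, ∫⁻ z, f i z ∂ν := by
  induction m with
  | zero => simp
  | succ m ih =>
    have hsplit (x₀ : X) (x : Fin (m + 1) → X) :
        ∏ i : Fin (m + 1), f i
            ((MeasurableEquiv.piFinSuccAbove (fun _ ↦ X) 0).symm (x₀, x) i.castSucc -
              (MeasurableEquiv.piFinSuccAbove (fun _ ↦ X) 0).symm (x₀, x) i.succ) =
          f 0 (x₀ - x 0) * ∏ i : Fin m, f i.succ (x i.castSucc - x i.succ) :=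
      Fin.prod_univ_succ _
    rw [← ((measurePreserving_piFinSuccAbove (fun _ : Fin (m + 2) ↦ ν) 0).symm).lintegral_comp
      (by fun_prop), lintegral_prod_symm _ (by fun_prop), Fin.prod_univ_succ,
      ← ih (f := fun i ↦ f i.succ) (fun i ↦ hf _), ← lintegral_const_mul _ (by fun_prop)]
    refine lintegral_congr fun x ↦ ?_
    simp_rw [hsplit]
    rw [lintegral_mul_const _ (by fun_prop), lintegral_sub_right_eq_self]

lemma integral_prod_sub_succ {f : Fin m → X → ℝ} (hf : ∀ i, Measurable (f i))
    (hf0 : ∀ i z, 0 ≤ f i z) :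
    ∫ x : Fin (m + 1) → X, ∏ i, f i (x i.castSucc - x i.succ) ∂(Measure.pi fun _ ↦ ν) =
      ∏ i, ∫ z, f i z ∂ν := by
  have hmeas : Measurable fun x : Fin (m + 1) → X ↦ ∏ i, f i (x i.castSucc - x i.succ) := by
    fun_prop
  rw [integral_eq_lintegral_of_nonneg_ae
    (ae_of_all _ fun x ↦ Finset.prod_nonneg fun i _ ↦ hf0 _ _) hmeas.aestronglyMeasurable]
  simp_rw [ENNReal.ofReal_prod_of_nonneg fun i _ ↦ hf0 i _]
  rw [lintegral_prod_sub_succ ν (f := fun i z ↦ ENNReal.ofReal (f i z)) (fun i ↦ by fun_prop),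
    ENNReal.toReal_prod]
  exact Finset.prod_congr rfl fun i _ ↦ (integral_eq_lintegral_of_nonneg_ae
    (ae_of_all _ (hf0 i)) (hf i).aestronglyMeasurable).symm

end PathIntegral

lemma injective_sym2_castSucc_succ {α : Type*} {m : ℕ} {v : Fin (m + 1) → α}
    (hv : Function.Injective v) :
    Function.Injective fun j : Fin m ↦ s(v j.castSucc, v j.succ) := by
  intro i j hij
  rcases Sym2.eq_iff.1 hij with ⟨h, -⟩ | ⟨h, h'⟩
  · exact Fin.castSucc_injective _ (hv h)
  · have hi := congrArg Fin.val (hv h)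
    have hj := congrArg Fin.val (hv h')
    simp only [Fin.val_castSucc, Fin.val_succ] at hi hj
    omega

lemma exists_vertexPair_sym2_eq {k : ℕ} {i j : Fin k} (hij : i ≠ j) :
    ∃ p : VertexPair k, s(p.1.1, p.1.2) = s(i, j) :=
  hij.lt_or_gt.elim (fun h ↦ ⟨⟨(i, j), h⟩, rfl⟩) fun h ↦ ⟨⟨(j, i), h⟩, Sym2.eq_swap⟩

variable {k d : ℕ} {H : SimpleGraph (Fin k)} {γ μ : ℝ} {x : Fin k → Torus d} {y : Fin k → ℝ}

lemma patternKernel_sub_le_prod_edges (hγ : 0 ≤ γ) (hμ : 0 ≤ μ) (hy : y ∈ posOrthant (Fin k))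
    {ι : Type*} [Fintype ι] {a b : ι → Fin k} (hadj : ∀ i, H.Adj (a i) (b i))
    (hinj : Function.Injective fun i ↦ s(a i, b i)) :
    patternKernel .sub H γ μ d y x ≤
      ∏ i, connKernel γ μ d (y (a i) * y (b i)) (dist (x (a i)) (x (b i))) := by
  classical
  choose p hp using fun i ↦ exists_vertexPair_sym2_eq (hadj i).ne
  have hpinj : Function.Injective p := fun i j hij ↦ hinj (by simp only [← hp, hij])
  have hfactor (i : ι) : pairFactor .sub (H.Adj (p i).1.1 (p i).1.2)
      (connKernel γ μ d (y (p i).1.1 * y (p i).1.2) (dist (x (p i).1.1) (x (p i).1.2))) =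
        connKernel γ μ d (y (a i) * y (b i)) (dist (x (a i)) (x (b i))) := by
    rcases Sym2.eq_iff.1 (hp i) with ⟨h₁, h₂⟩ | ⟨h₁, h₂⟩
    · rw [h₁, h₂, pairFactor, if_pos (hadj i)]
    · rw [h₁, h₂, pairFactor, if_pos (hadj i).symm, mul_comm, dist_comm]
  simp_rw [← hfactor]
  rw [← Finset.prod_image (s := Finset.univ) (g := p) (f := fun q ↦ pairFactor .sub
    (H.Adj q.1.1 q.1.2) (connKernel γ μ d (y q.1.1 * y q.1.2) (dist (x q.1.1) (x q.1.2))))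
    hpinj.injOn]
  exact prod_le_prod_of_subset_of_le_one (Finset.subset_univ _)
    (fun _ _ ↦ (pairFactor_mem_Icc (connKernel_mem_Icc hγ hμ hy _ _)).1)
    fun _ _ _ ↦ (pairFactor_mem_Icc (connKernel_mem_Icc hγ hμ hy _ _)).2

lemma positionIntegral_sub_le_prod_path (hγ : 0 ≤ γ) (hμ : 0 ≤ μ) (hy : y ∈ posOrthant (Fin k))
    {m : ℕ} {v : Fin (m + 1) → Fin k} (hv : Function.Injective v)
    (hadj : ∀ j : Fin m, H.Adj (v j.castSucc) (v j.succ)) :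
    positionIntegral .sub H γ μ d y ≤
      ∏ j : Fin m, ∫ z : Torus d, connKernel γ μ d (y (v j.castSucc) * y (v j.succ)) ‖z‖ := by
  let K (j : Fin m) (r : ℝ) : ℝ := connKernel γ μ d (y (v j.castSucc) * y (v j.succ)) r
  have hyy (j : Fin m) : 0 ≤ y (v j.castSucc) * y (v j.succ) := (mul_pos (hy _) (hy _)).le
  have hK (j : Fin m) {r : ℝ} (hr : 0 ≤ r) : 0 ≤ K j r := connKernel_nonneg hμ (hyy j) hr
  have hKmeas (j : Fin m) : Measurable (K j) := by unfold K connKernel; fun_prop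
  let F (x : Fin (m + 1) → Torus d) : ℝ := ∏ j : Fin m, K j ‖x j.castSucc - x j.succ‖
  have hF : Measurable F := by fun_prop
  have hF1 (x : Fin (m + 1) → Torus d) : F x ∈ Set.Icc (0 : ℝ) 1 :=
    ⟨Finset.prod_nonneg fun j _ ↦ hK j (norm_nonneg _), Finset.prod_le_one
      (fun j _ ↦ hK j (norm_nonneg _)) fun j _ ↦ connKernel_le_one hγ hμ (hyy j) (norm_nonneg _)⟩
  have hpres := measurePreserving_comp_injective (volume : Measure (Torus d)) hv
  calc positionIntegral .sub H γ μ d y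
      ≤ ∫ x, F (x ∘ v) ∂(Measure.pi fun _ ↦ (volume : Measure (Torus d))) :=
        integral_mono (integrable_patternKernel hγ hμ hy)
          (.of_mem_Icc 0 1 (hF.comp hpres.measurable).aemeasurable (ae_of_all _ fun x ↦ hF1 _))
          fun x ↦ by
            simpa only [F, K, dist_eq_norm, Function.comp_apply] using
              patternKernel_sub_le_prod_edges hγ hμ hy hadj (injective_sym2_castSucc_succ hv)
    _ = ∫ x, F x ∂(Measure.pi fun _ ↦ (volume : Measure (Torus d))) := by
        rw [← hpres.map_eq, integral_map hpres.aemeasurable hF.aestronglyMeasurable]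
    _ = ∏ j, ∫ z : Torus d, K j ‖z‖ :=
        integral_prod_sub_succ volume (f := fun j z ↦ K j ‖z‖) (fun j ↦ by fun_prop)
          fun j z ↦ hK j (norm_nonneg z)

lemma le_mul_prod_rpow_of_forall_mul_le {ι : Type*} [Fintype ι] [Nonempty ι] {x K : ℝ}
    {M : ι → ℝ} (hx : 0 ≤ x) (hK : 0 ≤ K) (hM : ∀ i, 0 < M i)
    (hle : ∀ i, x * M i ≤ K * ∏ j, M j) :
    x ≤ K * ∏ i, M i ^ (1 - (Fintype.card ι : ℝ)⁻¹) := by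
  have hn : Fintype.card ι ≠ 0 := Fintype.card_ne_zero
  rw [Real.finsetProd_rpow _ _ fun i _ ↦ (hM i).le]
  set n := Fintype.card ι
  set P := ∏ i, M i
  have hP : 0 < P := Finset.prod_pos fun i _ ↦ hM i
  have hprod : x ^ n * P ≤ (K * P) ^ n := by
    simpa [Finset.prod_mul_distrib] using Finset.prod_le_prod (s := Finset.univ)
      (fun i _ ↦ mul_nonneg hx (hM i).le) fun i _ ↦ hle i
  have hroot : (P ^ (1 - (n : ℝ)⁻¹)) ^ n * P = P ^ n := by
    rw [Real.rpow_sub hP, Real.rpow_one, div_pow, Real.rpow_inv_natCast_pow hP.le hn,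
      div_mul_cancel₀ _ hP.ne']
  refine le_of_pow_le_pow_left₀ hn (by positivity) (le_of_mul_le_mul_right ?_ hP)
  rwa [mul_pow, mul_assoc, hroot, ← mul_pow]

lemma prod_add_one_eq_prod_path_mul {m : ℕ} (M : Fin (m + 1) → ℝ) (a : Fin (m + 1)) :
    ∏ i, M i = (∏ j : Fin m, M (a + 1 + j.castSucc)) * M a := by
  rw [← Equiv.prod_comp (Equiv.addLeft (a + 1)), Fin.prod_univ_castSucc]
  simp only [Equiv.coe_addLeft]
  rw [add_assoc a 1, add_comm 1, Fin.last_add_one, add_zero]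

lemma exists_positionIntegral_sub_le_prod_cycle [NeZero k] (hγ : 1 < γ) (hμ : 0 < μ) (hd : d ≠ 0)
    {σ : Equiv.Perm (Fin k)} (hσ : ∀ i, H.Adj (σ i) (σ (i + 1))) :
    ∃ C, ∀ y ∈ posOrthant (Fin k), positionIntegral .sub H γ μ d y ≤
      C * ∏ i, min 1 (y (σ i) * y (σ (i + 1))) ^ (1 - (k : ℝ)⁻¹) := by
  obtain ⟨m, rfl⟩ := Nat.exists_eq_succ_of_ne_zero (NeZero.ne k)
  obtain ⟨C, hC, hkernel⟩ := exists_integral_connKernel_norm_le hγ hμ hd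
  have hγ0 : 0 ≤ γ := zero_le_one.trans hγ.le
  refine ⟨C ^ m, fun y hy ↦ ?_⟩
  set M : Fin (m + 1) → ℝ := fun i ↦ min 1 (y (σ i) * y (σ (i + 1)))
  have hM (i : Fin (m + 1)) : 0 < M i := lt_min one_pos (mul_pos (hy _) (hy _))
  have hle (a : Fin (m + 1)) : positionIntegral .sub H γ μ d y * M a ≤ C ^ m * ∏ i, M i := by
    let v (i : Fin (m + 1)) : Fin (m + 1) := σ (a + 1 + i)
    have hsucc (j : Fin m) : v j.succ = σ (a + 1 + j.castSucc + 1) := by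
      rw [add_assoc (a + 1), Fin.coeSucc_eq_succ]
    rw [prod_add_one_eq_prod_path_mul M a, ← mul_assoc]
    refine mul_le_mul_of_nonneg_right ?_ (hM a).le
    calc positionIntegral .sub H γ μ d y
        ≤ ∏ j : Fin m, ∫ z : Torus d, connKernel γ μ d (y (v j.castSucc) * y (v j.succ)) ‖z‖ :=
          positionIntegral_sub_le_prod_path hγ0 hμ.le hy
            (σ.injective.comp (add_right_injective (a + 1))) fun j ↦ hsucc j ▸ hσ _
      _ ≤ ∏ j : Fin m, C * M (a + 1 + j.castSucc) := by
          refine Finset.prod_le_prod (fun j _ ↦ integral_nonneg fun z ↦ connKernel_nonneg hμ.le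
            (mul_pos (hy _) (hy _)).le (norm_nonneg z)) fun j _ ↦ ?_
          rw [hsucc]
          exact hkernel _ (mul_pos (hy _) (hy _))
      _ = C ^ m * ∏ j : Fin m, M (a + 1 + j.castSucc) := by
          rw [Finset.prod_mul_distrib, Finset.prod_const, Finset.card_univ, Fintype.card_fin]
  simpa only [Fintype.card_fin] using le_mul_prod_rpow_of_forall_mul_le
    (positionIntegral_nonneg hγ0 hμ.le hy) (by positivity) hM hle

end HamiltonianCycle

section OddCycle

variable {k : ℕ} [NeZero k] {δ τ : ℝ}

/-- The linear map sending `u` to the sums of cyclically consecutive coordinates of `u ∘ σ`. -/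
def cyclicSum (σ : Equiv.Perm (Fin k)) : (Fin k → ℝ) →ₗ[ℝ] (Fin k → ℝ) :=
  LinearMap.funLeft ℝ ℝ σ + LinearMap.funLeft ℝ ℝ fun i ↦ σ (i + 1)

lemma cyclicSum_apply (σ : Equiv.Perm (Fin k)) (u : Fin k → ℝ) (i : Fin k) :
    cyclicSum σ u i = u (σ i) + u (σ (i + 1)) :=
  rfl

lemma sum_cyclicSum (σ : Equiv.Perm (Fin k)) (u : Fin k → ℝ) :
    ∑ i, cyclicSum σ u i = 2 * ∑ i, u i := by
  have hshift : ∑ i, u (σ (i + 1)) = ∑ i, u i :=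
    Equiv.sum_comp ((Equiv.addRight 1).trans σ) u
  simp_rw [cyclicSum_apply]
  rw [Finset.sum_add_distrib, hshift, Equiv.sum_comp σ u, two_mul]

lemma injective_cyclicSum (hodd : Odd k) (σ : Equiv.Perm (Fin k)) :
    Function.Injective (cyclicSum σ) := by
  refine (injective_iff_map_eq_zero _).2 fun u hu ↦ ?_
  have hstep (i : Fin k) : u (σ (i + 1)) = -u (σ i) :=
    eq_neg_of_add_eq_zero_right (congrFun hu i)
  have hiter (n : ℕ) (i : Fin k) : u (σ (i + n • 1)) = (-1) ^ n * u (σ i) := by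
    induction n with
    | zero => simp
    | succ n ih => rw [succ_nsmul, ← add_assoc, hstep, ih, pow_succ']; ring
  have hzero (i : Fin k) : u (σ i) = 0 := by
    have hcycle : k • (1 : Fin k) = 0 := by simpa using card_nsmul_eq_zero (x := (1 : Fin k))
    have h := hiter k i
    rw [hodd.neg_one_pow, hcycle, add_zero] at h
    linarith
  exact funext fun i ↦ by simpa using hzero (σ.symm i)

lemma integrable_exp_neg_mul_abs (hδ : 0 < δ) : Integrable fun t : ℝ ↦ Real.exp (-(δ * |t|)) := by
  rw [← integrableOn_univ, ← Set.Iic_union_Ioi (a := (0 : ℝ))]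
  refine .union
    ((integrableOn_exp_mul_Iic hδ 0).congr_fun (fun t ht ↦ ?_) measurableSet_Iic)
    ((integrableOn_exp_mul_Ioi (neg_lt_zero.2 hδ) 0).congr_fun (fun t ht ↦ ?_) measurableSet_Ioi)
  · dsimp only
    rw [abs_of_nonpos ht, mul_neg, neg_neg]
  · dsimp only
    rw [abs_of_pos ht, neg_mul]

lemma integrable_comp_linearMap_of_injective {E F : Type*} [NormedAddCommGroup E]
    [NormedSpace ℝ E] [MeasurableSpace E] [BorelSpace E] [FiniteDimensional ℝ E]
    [NormedAddCommGroup F] (ν : Measure E) [ν.IsAddHaarMeasure] {L : E →ₗ[ℝ] E}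
    (hL : Function.Injective L) {f : E → F} (hf : Integrable f ν) :
    Integrable (fun x ↦ f (L x)) ν := by
  have hdet : LinearMap.det L ≠ 0 := fun h ↦
    (LinearMap.bot_lt_ker_of_det_eq_zero h).ne' (LinearMap.ker_eq_bot.2 hL)
  have hmap : Integrable f (ν.map L) := by
    rw [Measure.map_linearMap_addHaar_eq_smul_addHaar ν hdet]
    exact hf.smul_measure ENNReal.ofReal_ne_top
  exact hmap.comp_measurable L.continuous_of_finiteDimensional.measurable

lemma integrable_prod_exp_neg_mul_abs_cyclicSum (hδ : 0 < δ) (hodd : Odd k)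
    (σ : Equiv.Perm (Fin k)) :
    Integrable fun u : Fin k → ℝ ↦ ∏ i, Real.exp (-(δ * |cyclicSum σ u i|)) :=
  integrable_comp_linearMap_of_injective volume (injective_cyclicSum hodd σ)
    (f := fun z ↦ ∏ i, Real.exp (-(δ * |z i|)))
    (Integrable.fintype_prod fun _ ↦ integrable_exp_neg_mul_abs hδ)

lemma exp_neg_mul_mul_min_exp_rpow_le (a θ z : ℝ) :
    Real.exp (-(a * z)) * min 1 (Real.exp z) ^ θ ≤ Real.exp (-(min a (θ - a) * |z|)) := by
  rcases le_total 0 z with hz | hz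
  · rw [min_eq_left (Real.one_le_exp hz), Real.one_rpow, mul_one, abs_of_nonneg hz]
    exact Real.exp_le_exp.2 (neg_le_neg (mul_le_mul_of_nonneg_right (min_le_left _ _) hz))
  · rw [min_eq_right (Real.exp_le_one_iff.2 hz), abs_of_nonpos hz, ← Real.exp_mul,
      ← Real.exp_add]
    refine Real.exp_le_exp.2 ?_
    nlinarith [min_le_right a (θ - a)]

lemma prod_abs_exp_mul_prod_exp_rpow (τ : ℝ) (σ : Equiv.Perm (Fin k)) (u : Fin k → ℝ) :
    (∏ i, |Real.exp (u i)|) * ∏ i, Real.exp (u i) ^ (-τ) =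
      ∏ i, Real.exp (-((τ - 1) / 2 * cyclicSum σ u i)) := by
  simp_rw [Real.abs_exp, ← Real.exp_mul]
  rw [← Real.exp_sum, ← Real.exp_sum, ← Real.exp_sum, ← Real.exp_add, Finset.sum_neg_distrib,
    ← Finset.mul_sum, ← Finset.sum_mul, sum_cyclicSum]
  ring_nf

theorem integrableOn_prod_rpow_mul_of_le_prod_cycle (hodd : Odd k) (hτ : 1 < τ) {C θ : ℝ}
    (hθ : (τ - 1) / 2 < θ) {σ : Equiv.Perm (Fin k)} {f : (Fin k → ℝ) → ℝ} (hf : Measurable f)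
    (hbound : ∀ y ∈ posOrthant (Fin k), |f y| ≤ C * ∏ i, min 1 (y (σ i) * y (σ (i + 1))) ^ θ) :
    IntegrableOn (fun y ↦ (∏ i, y i ^ (-τ)) * f y) (posOrthant (Fin k)) := by
  have hδ : 0 < min ((τ - 1) / 2) (θ - (τ - 1) / 2) := lt_min (by linarith) (by linarith)
  have hC : 0 ≤ C := by
    simpa using (abs_nonneg _).trans (hbound (fun _ ↦ 1) fun _ ↦ one_pos)
  rw [posOrthant_eq_univ_pi, ← Real.range_exp, ← Set.image_univ,
    integrableOn_univ_pi_image_iff .univ (fun t _ ↦ Real.hasDerivAt_exp t)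
      Real.exp_injective.injOn, Set.pi_univ, integrableOn_univ]
  refine ((integrable_prod_exp_neg_mul_abs_cyclicSum hδ hodd σ).const_mul C).mono'
    (by fun_prop) (ae_of_all _ fun u ↦ ?_)
  have hexp (i : Fin k) : Real.exp (u (σ i)) * Real.exp (u (σ (i + 1))) =
      Real.exp (cyclicSum σ u i) := (Real.exp_add _ _).symm
  rw [← mul_assoc, prod_abs_exp_mul_prod_exp_rpow τ σ, norm_mul, Real.norm_of_nonneg
    (Finset.prod_nonneg fun _ _ ↦ (Real.exp_pos _).le), Real.norm_eq_abs]
  calc (∏ i, Real.exp (-((τ - 1) / 2 * cyclicSum σ u i))) * |f fun i ↦ Real.exp (u i)|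
      ≤ (∏ i, Real.exp (-((τ - 1) / 2 * cyclicSum σ u i))) *
          (C * ∏ i, min 1 (Real.exp (cyclicSum σ u i)) ^ θ) := by
        simp_rw [← hexp]
        gcongr
        exact hbound _ fun i ↦ Real.exp_pos _
    _ = C * ∏ i, Real.exp (-((τ - 1) / 2 * cyclicSum σ u i)) *
          min 1 (Real.exp (cyclicSum σ u i)) ^ θ := by
        rw [mul_left_comm, Finset.prod_mul_distrib]
    _ ≤ C * ∏ i, Real.exp (-(min ((τ - 1) / 2) (θ - (τ - 1) / 2) * |cyclicSum σ u i|)) := by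
        gcongr with i
        exact exp_neg_mul_mul_min_exp_rpow_le _ _ _

end OddCycle

section LimitIntegrand

variable {k d : ℕ} [NeZero k] {H : SimpleGraph (Fin k)} {γ μ τ : ℝ}

theorem IsHamiltonianPattern.integrableOn_prod_rpow_mul_positionIntegral_sub
    (hH : IsHamiltonianPattern H) (hodd : Odd k) (hτ : τ ∈ Set.Ioo (1 : ℝ) 3)
    (hk : 2 / (3 - τ) < k) (hγ : 1 < γ) (hμ : 0 < μ) (hd : d ≠ 0) :
    IntegrableOn (fun y ↦ (∏ i, y i ^ (-τ)) * positionIntegral .sub H γ μ d y)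
      (posOrthant (Fin k)) := by
  obtain ⟨σ, hσ⟩ := hH
  obtain ⟨C, hbound⟩ := exists_positionIntegral_sub_le_prod_cycle hγ hμ hd hσ
  refine integrableOn_prod_rpow_mul_of_le_prod_cycle (C := C) (θ := 1 - (k : ℝ)⁻¹) (σ := σ)
    hodd hτ.1 ?_ stronglyMeasurable_positionIntegral.measurable fun y hy ↦ ?_
  · have hkinv : (k : ℝ)⁻¹ < (3 - τ) / 2 := by
      rw [← inv_div 2]
      exact inv_strictAnti₀ (div_pos two_pos (sub_pos.2 hτ.2)) hk
    linarith
  · rw [abs_of_nonneg (positionIntegral_nonneg (zero_le_one.trans hγ.le) hμ.le hy)]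
    exact hbound y hy

end LimitIntegrand

/-! ### Positivity and the limit theorem -/

section Positivity

variable {s : StarKind} {k d : ℕ} {H : SimpleGraph (Fin k)} {γ μ τ : ℝ}

instance : Infinite (AddCircle (1 : ℝ)) :=
  have : Infinite (Set.Ico (0 : ℝ) (0 + 1)) := (Set.Ico_infinite (by simp)).to_subtype
  (AddCircle.equivIco (1 : ℝ) 0).infinite_iff.2 this

lemma exists_pos_forall_lt_dist (k : ℕ) (hd : d ≠ 0) :
    ∃ (x : Fin k → Torus d) (r : ℝ), 0 < r ∧
      ∀ p : VertexPair k, r < dist (x p.1.1) (x p.1.2) := by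
  have : NeZero d := ⟨hd⟩
  let x (i : Fin k) : Torus d := Infinite.natEmbedding (Torus d) i
  have hx : Function.Injective x :=
    (Infinite.natEmbedding (Torus d)).injective.comp Fin.val_injective
  have hsmall : ∀ᶠ r in nhdsWithin (0 : ℝ) (Set.Ioi 0),
      ∀ p : VertexPair k, r < dist (x p.1.1) (x p.1.2) :=
    eventually_all.2 fun p ↦
      nhdsWithin_le_nhds (Iio_mem_nhds (dist_pos.2 (hx.ne p.2.ne)))
  obtain ⟨r, hdist, hr⟩ := (hsmall.and self_mem_nhdsWithin).exists
  exact ⟨x, r, hr, hdist⟩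

lemma pairFactor_pos {adj : Prop} {q : ℝ} (hq : q ∈ Set.Ioo (0 : ℝ) 1) :
    0 < pairFactor s adj q := by
  unfold pairFactor
  split_ifs
  · exact hq.1
  · cases s
    exacts [sub_pos.2 hq.2, one_pos]

lemma connKernel_mem_Ioo (hγ : 0 < γ) (hμ : 0 < μ) {a r : ℝ} (ha : 0 < a) (hr : 0 < r)
    (har : a < μ * r ^ d) : connKernel γ μ d a r ∈ Set.Ioo (0 : ℝ) 1 := by
  have hratio : a / (μ * r ^ d) < 1 := (div_lt_one (by positivity)).2 har
  rw [connKernel, min_eq_left hratio.le]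
  exact ⟨by positivity, Real.rpow_lt_one (by positivity) hratio hγ⟩

lemma patternKernel_pos (hγ : 0 < γ) (hμ : 0 < μ) {y : Fin k → ℝ} {x : Fin k → Torus d} {r : ℝ}
    (hr : 0 < r) (hy : ∀ i, y i ∈ Set.Ioo 0 √(μ * r ^ d))
    (hx : ∀ p : VertexPair k, r < dist (x p.1.1) (x p.1.2)) :
    0 < patternKernel s H γ μ d y x := by
  refine Finset.prod_pos fun p _ ↦ pairFactor_pos (connKernel_mem_Ioo hγ hμ
    (mul_pos (hy _).1 (hy _).1) (hr.trans (hx p)) ?_)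
  calc y p.1.1 * y p.1.2
      < √(μ * r ^ d) * √(μ * r ^ d) :=
        mul_lt_mul'' (hy _).2 (hy _).2 (hy _).1.le (hy _).1.le
    _ = μ * r ^ d := Real.mul_self_sqrt (by positivity)
    _ ≤ μ * dist (x p.1.1) (x p.1.2) ^ d := by gcongr; exact (hx p).le

lemma exists_forall_positionIntegral_pos (s : StarKind) (H : SimpleGraph (Fin k)) (hγ : 0 < γ)
    (hμ : 0 < μ) (hd : d ≠ 0) :
    ∃ b, 0 < b ∧ ∀ y : Fin k → ℝ, (∀ i, y i ∈ Set.Ioo 0 b) → 0 < positionIntegral s H γ μ d y := by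
  obtain ⟨x₀, r, hr, hx₀⟩ := exists_pos_forall_lt_dist k hd
  have hopen : IsOpen {x : Fin k → Torus d | ∀ p : VertexPair k, r < dist (x p.1.1) (x p.1.2)} := by
    rw [Set.ofPred_forall]
    exact isOpen_iInter_of_finite fun p ↦ isOpen_lt (by fun_prop) (by fun_prop)
  refine ⟨√(μ * r ^ d), by positivity, fun y hy ↦ ?_⟩
  have hy0 : y ∈ posOrthant (Fin k) := fun i ↦ (hy i).1
  rw [positionIntegral, integral_pos_iff_support_of_nonneg
    (fun _ ↦ (patternKernel_mem_Icc hγ.le hμ.le hy0).1) (integrable_patternKernel hγ.le hμ.le hy0)]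
  exact (hopen.measure_pos _ ⟨x₀, hx₀⟩).trans_le
    (measure_mono fun x hx ↦ (patternKernel_pos hγ hμ hr hy hx).ne')

theorem starInt_pos (hγ : 0 < γ) (hμ : 0 < μ) (hd : d ≠ 0)
    (hint : IntegrableOn (fun y ↦ (∏ i, y i ^ (-τ)) * positionIntegral .sub H γ μ d y)
      (posOrthant (Fin k))) :
    0 < starInt s τ γ μ d H := by
  obtain ⟨b, hb, hpos⟩ := exists_forall_positionIntegral_pos s H hγ hμ hd
  have hweight (y : Fin k → ℝ) (hy : y ∈ posOrthant (Fin k)) : 0 < ∏ i, y i ^ (-τ) :=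
    Finset.prod_pos fun i _ ↦ Real.rpow_pos_of_pos (hy i) _
  have hopen : IsOpen (Set.univ.pi fun _ : Fin k ↦ Set.Ioo 0 b) :=
    isOpen_set_pi Set.finite_univ fun _ _ ↦ isOpen_Ioo
  have hnonempty : (Set.univ.pi fun _ : Fin k ↦ Set.Ioo 0 b).Nonempty :=
    Set.univ_pi_nonempty_iff.2 fun _ ↦ Set.nonempty_Ioo.2 hb
  rw [starInt_eq_integral_positionIntegral, setIntegral_pos_iff_support_of_nonneg_ae
    ((ae_restrict_mem measurableSet_posOrthant).mono fun y hy ↦ mul_nonneg (hweight y hy).le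
      (positionIntegral_nonneg hγ.le hμ.le hy))
    (integrableOn_prod_rpow_mul_positionIntegral hγ.le hμ.le hint)]
  refine (hopen.measure_pos volume hnonempty).trans_le (measure_mono fun y hy ↦ ?_)
  have hy0 : y ∈ posOrthant (Fin k) := fun i ↦ (hy i trivial).1
  exact ⟨(mul_pos (hweight y hy0) (hpos y fun i ↦ hy i trivial)).ne', hy0⟩

end Positivity

theorem girg_hamiltonian_nongeometric_expectation_general
    {k d : ℕ} [NeZero k] (hd : d ≠ 0) {τ γ c μbar : ℝ} (hτ : τ ∈ Set.Ioo (1 : ℝ) 3) (hγ : 1 < γ)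
    (hμ : 0 < μbar) {μW : Measure ℝ} [IsProbabilityMeasure μW] (hW : WeightTail τ c μW)
    {H : SimpleGraph (Fin k)} (hH : IsHamiltonianPattern H) (hk : 2 / (3 - τ) < k) (hodd : Odd k)
    (s : StarKind) :
    0 < starInt s τ γ μbar d H ∧
      Tendsto (fun n : ℕ ↦ (∫ ω, (starNTotal s H γ μbar d n ω : ℝ) ∂(girgMeasure μW d n)) /
          (n : ℝ) ^ ((k : ℝ) * (3 - τ) / 2)) atTop
        (nhds ((c * (τ - 1)) ^ k * starInt s τ γ μbar d H)) := by
  have hγ0 : 0 < γ := one_pos.trans hγ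
  have hint := hH.integrableOn_prod_rpow_mul_positionIntegral_sub hodd hτ hk hγ hμ hd
  exact ⟨starInt_pos hγ0 hμ hd hint,
    tendsto_integral_starNTotal_div hτ.1 hγ0.le hμ.le hW hint⟩

/-- Proposition `ConvergenceMeanNongeo`: for a Hamiltonian pattern
of odd size `k > 2/(3-τ)`, `E[N^{sub}(H)]/n^{k(3-τ)/2}` and
`E[N^{ind}(H)]/n^{k(3-τ)/2}` converge to finite positive constants proportional to
the corresponding limiting integrals. -/
theorem girg_hamiltonian_nongeometric_expectation
    {k d : ℕ} [NeZero k] (hd : 1 ≤ d) (τ γ c : ℝ) (hτ : τ ∈ Set.Ioo (2:ℝ) 3) (hγ : 1 < γ)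
    (μW : Measure ℝ) [IsProbabilityMeasure μW] (hW : WeightTail τ c μW)
    (H : SimpleGraph (Fin k)) (hH : IsHamiltonianPattern H)
    (hk : 2 / (3 - τ) < (k : ℝ)) (hodd : Odd k) :
    (0 < IsubInt τ γ (wMean μW) d H ∧
      ∃ C : ℝ, 0 < C ∧
        Tendsto (fun n : ℕ =>
            (∫ ω, (nSubTotal H γ (wMean μW) d n ω : ℝ) ∂(girgMeasure μW d n)) /
              (n : ℝ) ^ ((k : ℝ) * (3 - τ) / 2))
          atTop (nhds (C * IsubInt τ γ (wMean μW) d H))) ∧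
    (0 < IindInt τ γ (wMean μW) d H ∧
      ∃ C : ℝ, 0 < C ∧
        Tendsto (fun n : ℕ =>
            (∫ ω, (nIndTotal H γ (wMean μW) d n ω : ℝ) ∂(girgMeasure μW d n)) /
              (n : ℝ) ^ ((k : ℝ) * (3 - τ) / 2))
          atTop (nhds (C * IindInt τ γ (wMean μW) d H))) := by
  have hc : 0 < (c * (τ - 1)) ^ k :=
    pow_pos (mul_pos hW.1 (sub_pos.2 (one_lt_two.trans hτ.1))) k
  have hmain := girg_hamiltonian_nongeometric_expectation_general (Nat.one_le_iff_ne_zero.1 hd)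
    ⟨one_lt_two.trans hτ.1, hτ.2⟩ hγ (hW.wMean_pos hτ.1) hW hH hk hodd
  exact ⟨⟨(hmain .sub).1, _, hc, (hmain .sub).2⟩, ⟨(hmain .ind).1, _, hc, (hmain .ind).2⟩⟩

end
end

section
/- Fix τ ∈ (2,3), γ > 1, an integer d ≥ 1, a constant μ > 0, and an odd integer k with k > 2/(3−τ). Then the integral ∫_{(0,∞)^k} ∏_{i=1}^k y_i^{−τ} ∫_{(T^d)^k} ∏_{i=1}^{k} min( y_i y_{i+1} / (μ ‖x_i − x_{i+1}‖^d), 1 )^γ dx_1 ⋯ dx_k dy_1 ⋯ dy_k is finite, where indices are taken modulo k (so y_{k+1} = y_1, x_{k+1} = x_1), the inner integral is with respect to the uniform (Haar) probability measure on the torus T^d = ℝ^d/ℤ^d, and ‖x−y‖ denotes the torus distance max_{j≤d} min(|x^(j)−y^(j)|, 1−|x^(j)−y^(j)|). -/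
open MeasureTheory Filter Finset

noncomputable section

/-!
Dropping one edge of the cycle leaves a path, whose spatial integral factorises into one-edge
integrals; the geometric mean over the `k` choices of the dropped edge bounds the spatial integral
by the product of all one-edge integrals to the power `1 - 1 / k`. For `a < 1` the integral of the
edge of weight product `s` is at most a constant times `min s 1 ^ a`. The substitution
`y i = exp (z i)` followed by `w i = z i + z (i + 1)`, which is invertible because the cycle is
odd, then factorises the weight integral into one-dimensional integrals of
`exp (-(τ - 1) / 2 * w) * min (exp w) 1 ^ (a * (1 - 1 / k))`, finite as soon as
`a * (1 - 1 / k) > (τ - 1) / 2`. Such an `a < 1` exists exactly when `k > 2 / (3 - τ)`.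
-/

section Cycle

variable {G : Type*} [MeasurableSpace G] {ν : Measure G}

lemma lintegral_pi_comp_perm [SigmaFinite ν] {ι : Type*} [Fintype ι] (σ : Equiv.Perm ι)
    (F : (ι → G) → ENNReal) :
    ∫⁻ x, F (x ∘ σ) ∂(Measure.pi fun _ => ν) = ∫⁻ x, F x ∂(Measure.pi fun _ => ν) :=
  (measurePreserving_arrowCongr' (fun _ => ν) (fun _ => ν) σ.symm (.refl G)
    fun _ => .id ν).lintegral_comp_emb (MeasurableEquiv.measurableEmbedding _) F

lemma lintegral_prod_cycle_sub_rotate [Sub G] [SigmaFinite ν] {k : ℕ} [NeZero k]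
    (g : Fin k → G → ENNReal) (e : Fin k) :
    ∫⁻ x : Fin k → G, ∏ i, g (i + e) (x i - x (i + 1)) ∂(Measure.pi fun _ => ν)
      = ∫⁻ x : Fin k → G, ∏ i, g i (x i - x (i + 1)) ∂(Measure.pi fun _ => ν) := by
  rw [← lintegral_pi_comp_perm (Equiv.addRight e)]
  refine lintegral_congr fun x => ?_
  rw [← Equiv.prod_comp (Equiv.addRight e) fun i => g i (x i - x (i + 1))]
  simp only [Function.comp_apply, Equiv.coe_addRight, add_right_comm]

variable [AddGroup G] [MeasurableAdd₂ G] [MeasurableNeg G] [ν.IsAddRightInvariant]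
  [IsProbabilityMeasure ν]

lemma lintegral_prod_path_sub {n : ℕ} {g : Fin n → G → ENNReal} (hg : ∀ i, Measurable (g i)) :
    ∫⁻ x : Fin (n + 1) → G, ∏ i, g i (x i.castSucc - x i.succ) ∂(Measure.pi fun _ => ν)
      = ∏ i, ∫⁻ u, g i u ∂ν := by
  induction n with
  | zero => simp
  | succ n ih =>
    have measurable_path {m : ℕ} {f : Fin m → G → ENNReal} (hf : ∀ i, Measurable (f i)) :
        Measurable fun x : Fin (m + 1) → G => ∏ i, f i (x i.castSucc - x i.succ) :=
      Finset.measurable_fun_prod _ fun i _ => (hf i).comp (by fun_prop)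
    have integrate_head (b : Fin (n + 1) → G) :
        ∫⁻ a, g 0 (a - b 0) * ∏ i : Fin n, g i.succ (b i.castSucc - b i.succ) ∂ν
          = (∫⁻ u, g 0 u ∂ν) * ∏ i : Fin n, g i.succ (b i.castSucc - b i.succ) := by
      rw [lintegral_mul_const _ (by have := hg 0; fun_prop),
        lintegral_sub_right_eq_self (fun u => g 0 u)]
    have split_head := (measurePreserving_piFinSuccAbove (fun _ : Fin (n + 2) => ν) 0).symm
    calc ∫⁻ x : Fin (n + 2) → G, ∏ i, g i (x i.castSucc - x i.succ) ∂(Measure.pi fun _ => ν)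
        = ∫⁻ b : Fin (n + 1) → G, ∫⁻ a,
            g 0 (a - b 0) * ∏ i : Fin n, g i.succ (b i.castSucc - b i.succ) ∂ν
            ∂(Measure.pi fun _ => ν) := by
          rw [← split_head.lintegral_comp (measurable_path hg)]
          refine (lintegral_prod_symm' _
            ((measurable_path hg).comp split_head.measurable)).trans ?_
          simp_rw [Function.comp_apply, Fin.prod_univ_succ]
          rfl
      _ = (∫⁻ u, g 0 u ∂ν) * ∫⁻ b : Fin (n + 1) → G,
            ∏ i : Fin n, g i.succ (b i.castSucc - b i.succ) ∂(Measure.pi fun _ => ν) := by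
          simp_rw [integrate_head]
          exact lintegral_const_mul _ (measurable_path fun i => hg i.succ)
      _ = ∏ i, ∫⁻ u, g i u ∂ν := by
          rw [ih fun i => hg i.succ, Fin.prod_univ_succ]

lemma lintegral_prod_cycle_sub_le {n : ℕ} {g : Fin (n + 1) → G → ENNReal}
    (hg : ∀ i, Measurable (g i)) (hlast : ∀ u, g (Fin.last n) u ≤ 1) :
    ∫⁻ x : Fin (n + 1) → G, ∏ i, g i (x i - x (i + 1)) ∂(Measure.pi fun _ => ν)
      ≤ ∏ i : Fin n, ∫⁻ u, g i.castSucc u ∂ν := by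
  rw [← lintegral_prod_path_sub fun i => hg i.castSucc]
  refine lintegral_mono fun x => ?_
  simp_rw [Fin.prod_univ_castSucc, Fin.coeSucc_eq_succ]
  exact mul_le_of_le_one_right' (hlast _)

/- Each of the `k` edges may be dropped in turn, leaving a path; in the product of the `k`
resulting bounds every edge integral appears `k - 1` times. -/
lemma lintegral_prod_cycle_sub_le_rpow {k : ℕ} [NeZero k] {g : Fin k → G → ENNReal}
    (hg : ∀ i, Measurable (g i)) (hg_le : ∀ i u, g i u ≤ 1) :
    ∫⁻ x : Fin k → G, ∏ i, g i (x i - x (i + 1)) ∂(Measure.pi fun _ => ν)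
      ≤ (∏ i, ∫⁻ u, g i u ∂ν) ^ (1 - 1 / (k : ℝ)) := by
  obtain ⟨n, rfl⟩ := Nat.exists_eq_succ_of_ne_zero (NeZero.ne k)
  set I := ∫⁻ x : Fin (n + 1) → G, ∏ i, g i (x i - x (i + 1)) ∂(Measure.pi fun _ => ν)
  have hpow : I ^ (n + 1) ≤ (∏ i, ∫⁻ u, g i u ∂ν) ^ n :=
    calc I ^ (n + 1) = ∏ _e : Fin (n + 1), I := by simp
      _ ≤ ∏ e, ∏ i : Fin n, ∫⁻ u, g (i.castSucc + e) u ∂ν :=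
          Finset.prod_le_prod' fun e _ => (lintegral_prod_cycle_sub_rotate g e).symm.trans_le
            (lintegral_prod_cycle_sub_le (fun i => hg (i + e)) fun u => hg_le _ u)
      _ = ∏ i : Fin n, ∏ e, ∫⁻ u, g (i.castSucc + e) u ∂ν := Finset.prod_comm
      _ = ∏ _i : Fin n, ∏ e, ∫⁻ u, g e u ∂ν :=
          Finset.prod_congr rfl fun i _ =>
            Equiv.prod_comp (Equiv.addLeft i.castSucc) fun e => ∫⁻ u, g e u ∂ν
      _ = (∏ i, ∫⁻ u, g i u ∂ν) ^ n := by simp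
  have hexp : 1 - 1 / ((n + 1 : ℕ) : ℝ) = n * ((n + 1 : ℕ) : ℝ)⁻¹ := by
    push_cast
    field_simp
    ring
  rw [hexp, ENNReal.rpow_mul, ENNReal.rpow_natCast, ENNReal.le_rpow_inv_iff (by positivity),
    ENNReal.rpow_natCast]
  exact hpow

end Cycle

section Torus

instance nullSingletonClass_volume_addCircle (T : ℝ) [hT : Fact (0 < T)] :
    NullSingletonClass (volume : Measure (AddCircle T)) where
  measure_singleton x := by
    rw [← Metric.closedBall_zero, AddCircle.volume_closedBall, mul_zero, min_eq_right hT.out.le,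
      ENNReal.ofReal_zero]

instance isProbabilityMeasure_volume_unitAddCircle :
    IsProbabilityMeasure (volume : Measure (AddCircle (1 : ℝ))) :=
  ⟨UnitAddCircle.measure_univ⟩

lemma integrable_norm_rpow_addCircle (T : ℝ) [Fact (0 < T)] {r : ℝ} (hr : -1 < r) :
    Integrable fun u : AddCircle T => ‖u‖ ^ r := by
  have hT : 0 < T := Fact.out
  have habs : IntegrableOn (fun x : ℝ => |x| ^ r) (Set.Ioc (-(T / 2)) (-(T / 2) + T)) := by
    have hcpow := (intervalIntegral.intervalIntegrable_cpow' (r := (r : ℂ)) (a := -(T / 2))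
      (b := -(T / 2) + T) hr).norm
    rw [intervalIntegrable_iff_integrableOn_Ioc_of_le (by linarith)] at hcpow
    simpa only [Complex.norm_cpow_real, Complex.norm_real, Real.norm_eq_abs] using hcpow
  rw [← (AddCircle.measurePreserving_mk T (-(T / 2))).integrable_comp
    (measurable_norm.pow_const r).aestronglyMeasurable]
  refine habs.congr_fun (fun x hx => ?_) measurableSet_Ioc
  have hx' : |x| ≤ |T| / 2 := by
    rw [abs_of_pos hT, abs_le]
    exact ⟨hx.1.le, by linarith [hx.2]⟩
  simp only [Function.comp_apply, (AddCircle.norm_coe_eq_abs_iff T hT.ne').mpr hx']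

/- The sup norm dominates each coordinate, so `‖u‖ ^ (-d a) ≤ ∏ i, ‖u i‖ ^ (-a)` off the null set
where some coordinate vanishes and `0 ^ (-a)` is a junk value. -/
lemma integrable_norm_rpow_torus (d : ℕ) {a : ℝ} (ha0 : 0 ≤ a) (ha1 : a < 1) :
    Integrable fun u : Torus d => ‖u‖ ^ (-(d * a)) := by
  have hprod : Integrable fun u : Torus d => ∏ i, ‖u i‖ ^ (-a) :=
    Integrable.fintype_prod fun _ => integrable_norm_rpow_addCircle 1 (by linarith)
  refine hprod.mono' (measurable_norm.pow_const _).aestronglyMeasurable ?_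
  have hne : ∀ᵐ u : Torus d, ∀ i, u i ≠ 0 :=
    ae_all_iff.mpr fun i => Measure.ae_eval_ne (μ := fun _ : Fin d => volume) i 0
  filter_upwards [hne] with u hu
  calc ‖‖u‖ ^ (-(d * a))‖ = ∏ _i : Fin d, ‖u‖ ^ (-a) := by
        rw [Real.norm_of_nonneg (by positivity), Finset.prod_const, Finset.card_univ,
          Fintype.card_fin, ← Real.rpow_mul_natCast (norm_nonneg u)]
        ring_nf
    _ ≤ ∏ i, ‖u i‖ ^ (-a) := Finset.prod_le_prod (fun _ _ => by positivity) fun i _ =>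
        Real.rpow_le_rpow_of_nonpos (norm_pos_iff.mpr (hu i)) (norm_le_pi_norm u i) (by linarith)

/-- The probability of an edge of the GIRG between two vertices at displacement `u` whose weights
have product `s`, in the scaling in which the number of vertices is absorbed into the weights.
For `d ≥ 1` the value at `u = 0` is junk (`s / 0 = 0`), but only on a null set. -/
def edgeKernel (γ μbar : ℝ) {d : ℕ} (s : ℝ) (u : Torus d) : ℝ :=
  min (s / (μbar * ‖u‖ ^ d)) 1 ^ γ

lemma measurable_edgeKernel (γ μbar : ℝ) {d : ℕ} (s : ℝ) :
    Measurable (edgeKernel γ μbar s : Torus d → ℝ) := by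
  unfold edgeKernel
  fun_prop

lemma edgeKernel_le_one {γ μbar s : ℝ} {d : ℕ} (hγ : 0 ≤ γ) (hμ : 0 ≤ μbar) (hs : 0 ≤ s)
    (u : Torus d) : edgeKernel γ μbar s u ≤ 1 :=
  Real.rpow_le_one (by positivity) (min_le_right _ _) hγ

lemma min_mul_one_rpow_le {s v a : ℝ} (hs : 0 ≤ s) (hv : 0 ≤ v) (ha : 0 ≤ a) :
    min (s * v) 1 ^ a ≤ min s 1 ^ a * (1 + v ^ a) := by
  have hmin : min (s * v) 1 ≤ min s 1 * max 1 v := by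
    rcases le_total s 1 with h | h
    · rw [min_eq_left h]
      exact (min_le_left _ _).trans (mul_le_mul_of_nonneg_left (le_max_right _ _) hs)
    · rw [min_eq_right h, one_mul]
      exact (min_le_right _ _).trans (le_max_left _ _)
  calc min (s * v) 1 ^ a ≤ (min s 1 * max 1 v) ^ a :=
        Real.rpow_le_rpow (by positivity) hmin ha
    _ = min s 1 ^ a * max 1 v ^ a := Real.mul_rpow (by positivity) (by positivity)
    _ ≤ min s 1 ^ a * (1 + v ^ a) := by
        gcongr
        rcases max_choice 1 v with h | h <;> rw [h]
        · simpa only [Real.one_rpow, le_add_iff_nonneg_right] using by positivity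
        · exact (le_add_iff_nonneg_left _).mpr zero_le_one

/- Lowering the exponent `γ` to `a < 1` makes the singularity of the kernel at `u = 0`
integrable. -/
lemma edgeKernel_le {γ μbar s a : ℝ} {d : ℕ} (hμ : 0 < μbar) (hs : 0 ≤ s) (ha : 0 < a)
    (haγ : a ≤ γ) (u : Torus d) :
    edgeKernel γ μbar s u ≤ min s 1 ^ a * (1 + μbar ^ (-a) * ‖u‖ ^ (-(d * a))) := by
  have hnonneg : 0 ≤ min (s / (μbar * ‖u‖ ^ d)) 1 := by positivity
  calc edgeKernel γ μbar s u ≤ min (s / (μbar * ‖u‖ ^ d)) 1 ^ a :=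
        Real.rpow_le_rpow_of_exponent_ge_of_imp hnonneg (min_le_right _ _) haγ
          fun _ h => absurd h (ha.trans_le haγ).ne'
    _ ≤ min s 1 ^ a * (1 + (μbar * ‖u‖ ^ d)⁻¹ ^ a) :=
        min_mul_one_rpow_le hs (by positivity) ha.le
    _ = min s 1 ^ a * (1 + μbar ^ (-a) * ‖u‖ ^ (-(d * a))) := by
        rw [Real.inv_rpow (by positivity), Real.mul_rpow hμ.le (by positivity), mul_inv,
          ← Real.rpow_natCast_mul (norm_nonneg u), Real.rpow_neg hμ.le,
          Real.rpow_neg (norm_nonneg u)]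

lemma exists_lintegral_edgeKernel_le {γ μbar a : ℝ} (d : ℕ) (hμ : 0 < μbar) (ha0 : 0 < a)
    (ha1 : a < 1) (haγ : a ≤ γ) :
    ∃ C : ENNReal, C ≠ ⊤ ∧ ∀ s : ℝ, 0 ≤ s →
      ∫⁻ u : Torus d, ENNReal.ofReal (edgeKernel γ μbar s u)
        ≤ C * ENNReal.ofReal (min s 1 ^ a) := by
  have hint : Integrable fun u : Torus d => 1 + μbar ^ (-a) * ‖u‖ ^ (-(d * a)) :=
    (integrable_const 1).add ((integrable_norm_rpow_torus d ha0.le ha1).const_mul _)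
  refine ⟨_, hint.lintegral_lt_top.ne, fun s hs => ?_⟩
  rw [mul_comm, ← lintegral_const_mul' _ _ ENNReal.ofReal_ne_top]
  refine lintegral_mono fun u => ?_
  rw [← ENNReal.ofReal_mul (by positivity)]
  exact ENNReal.ofReal_le_ofReal (edgeKernel_le hμ hs ha0 haγ u)

lemma exists_lintegral_cycle_edgeKernel_le {γ μbar a : ℝ} (d : ℕ) {k : ℕ} [NeZero k]
    (hμ : 0 < μbar) (ha0 : 0 < a) (ha1 : a < 1) (haγ : a ≤ γ) :
    ∃ C : ENNReal, C ≠ ⊤ ∧ ∀ s : Fin k → ℝ, (∀ i, 0 ≤ s i) →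
      ∫⁻ x : Fin k → Torus d, ∏ i, ENNReal.ofReal (edgeKernel γ μbar (s i) (x i - x (i + 1)))
          ∂(Measure.pi fun _ => (volume : Measure (Torus d)))
        ≤ C * ∏ i, ENNReal.ofReal (min (s i) 1 ^ (a * (1 - 1 / (k : ℝ)))) := by
  obtain ⟨C, hC, hedge⟩ := exists_lintegral_edgeKernel_le d hμ ha0 ha1 haγ
  have hp : 0 ≤ 1 - 1 / (k : ℝ) := Nat.one_sub_one_div_cast_nonneg k
  refine ⟨(C ^ k) ^ (1 - 1 / (k : ℝ)),
    ENNReal.rpow_ne_top_of_nonneg hp (ENNReal.pow_ne_top hC), fun s hs => ?_⟩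
  calc ∫⁻ x : Fin k → Torus d, ∏ i, ENNReal.ofReal (edgeKernel γ μbar (s i) (x i - x (i + 1)))
        ∂(Measure.pi fun _ => (volume : Measure (Torus d)))
      ≤ (∏ i, ∫⁻ u : Torus d, ENNReal.ofReal (edgeKernel γ μbar (s i) u)) ^ (1 - 1 / (k : ℝ)) :=
        lintegral_prod_cycle_sub_le_rpow
          (g := fun i u => ENNReal.ofReal (edgeKernel γ μbar (s i) u))
          (fun i => (measurable_edgeKernel γ μbar (s i)).ennreal_ofReal)
          fun i u => ENNReal.ofReal_le_one.mpr
            (edgeKernel_le_one (ha0.le.trans haγ) hμ.le (hs i) u)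
    _ ≤ (∏ i, C * ENNReal.ofReal (min (s i) 1 ^ a)) ^ (1 - 1 / (k : ℝ)) :=
        ENNReal.rpow_le_rpow (Finset.prod_le_prod' fun i _ => hedge (s i) (hs i)) hp
    _ = (C ^ k) ^ (1 - 1 / (k : ℝ)) *
          ∏ i, ENNReal.ofReal (min (s i) 1 ^ (a * (1 - 1 / (k : ℝ)))) := by
        rw [Finset.prod_mul_distrib, Finset.prod_const, Finset.card_univ, Fintype.card_fin,
          ENNReal.mul_rpow_of_nonneg _ _ hp, ← ENNReal.prod_rpow_of_nonneg hp]
        congr 1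
        refine Finset.prod_congr rfl fun i _ => ?_
        have hmin : 0 ≤ min (s i) 1 := le_min (hs i) zero_le_one
        rw [ENNReal.ofReal_rpow_of_nonneg (by positivity) hp, ← Real.rpow_mul hmin]

end Torus

section Weights

lemma setLIntegral_pos_eq_lintegral_exp {ι : Type*} [Fintype ι] (F : (ι → ℝ) → ENNReal) :
    ∫⁻ y in {y : ι → ℝ | ∀ i, 0 < y i}, F y
      = ∫⁻ z : ι → ℝ, ENNReal.ofReal (∏ i, Real.exp (z i)) * F fun i => Real.exp (z i) := by
  let expMap : (ι → ℝ) → ι → ℝ := fun z i => Real.exp (z i)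
  let expMap' (z : ι → ℝ) : (ι → ℝ) →L[ℝ] ι → ℝ :=
    .pi fun i => (Real.exp (z i) • ContinuousLinearMap.id ℝ ℝ).comp (.proj i)
  have hrange : {y : ι → ℝ | ∀ i, 0 < y i} = expMap '' Set.univ := by
    ext y
    simp only [Set.image_univ]
    exact ⟨fun hy => ⟨fun i => Real.log (y i), funext fun i => Real.exp_log (hy i)⟩,
      by rintro ⟨z, rfl⟩ i; exact Real.exp_pos _⟩
  have hderiv (z : ι → ℝ) : HasFDerivAt expMap (expMap' z) z :=
    hasFDerivAt_pi.mpr fun i => (hasFDerivAt_apply i z).exp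
  have hinj : Set.InjOn expMap Set.univ := fun a _ b _ hab =>
    funext fun i => Real.exp_injective (congrFun hab i)
  have hdet (z : ι → ℝ) : |(expMap' z).det| = ∏ i, Real.exp (z i) := by
    have hdet_smul (c : ℝ) : (c • ContinuousLinearMap.id ℝ ℝ).det = c := by
      simp [ContinuousLinearMap.det]
    rw [ContinuousLinearMap.det_pi, Finset.prod_congr rfl fun i _ => hdet_smul (Real.exp (z i)),
      abs_of_pos (by positivity)]
  rw [hrange, lintegral_image_eq_lintegral_abs_det_fderiv_mul _ MeasurableSet.univ
    (fun z _ => (hderiv z).hasFDerivWithinAt) hinj, Measure.restrict_univ]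
  simp_rw [hdet]
  rfl

lemma lintegral_comp_linearMap_lt_top {E : Type*} [NormedAddCommGroup E] [NormedSpace ℝ E]
    [MeasurableSpace E] [BorelSpace E] [FiniteDimensional ℝ E] {μ : Measure E}
    [μ.IsAddHaarMeasure] {A : E →ₗ[ℝ] E} (hA : Function.Injective A) {f : E → ENNReal}
    (hf : Measurable f) (hf_fin : ∫⁻ w, f w ∂μ < ⊤) : ∫⁻ z, f (A z) ∂μ < ⊤ := by
  have hdet : LinearMap.det A ≠ 0 :=
    (LinearEquiv.isUnit_det' (LinearEquiv.ofInjectiveEndo A hA)).ne_zero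
  rw [← lintegral_map hf A.continuous_of_finiteDimensional.measurable,
    Measure.map_linearMap_addHaar_eq_smul_addHaar μ hdet, lintegral_smul_measure]
  exact ENNReal.mul_lt_top ENNReal.ofReal_lt_top hf_fin

/-- The linear map sending `(z i)` to the sums `z i + z (i + 1)` over the edges of the `k`-cycle,
i.e. the unsigned incidence matrix of the cycle. -/
def cycleSum (k : ℕ) [NeZero k] : (Fin k → ℝ) →ₗ[ℝ] Fin k → ℝ :=
  .id + LinearMap.funLeft ℝ ℝ (· + 1)

lemma cycleSum_apply {k : ℕ} [NeZero k] (z : Fin k → ℝ) (i : Fin k) :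
    cycleSum k z i = z i + z (i + 1) := rfl

lemma sum_cycleSum {k : ℕ} [NeZero k] (z : Fin k → ℝ) :
    ∑ i, cycleSum k z i = 2 * ∑ i, z i := by
  simp_rw [cycleSum_apply, Finset.sum_add_distrib, two_mul]
  exact congrArg _ (Equiv.sum_comp (Equiv.addRight (1 : Fin k)) z)

/- A kernel vector alternates in sign along the cycle, so going once around an odd cycle gives
`z i = -z i`. -/
lemma cycleSum_injective {k : ℕ} [NeZero k] (hk : Odd k) : Function.Injective (cycleSum k) := by
  rw [injective_iff_map_eq_zero]
  intro z hz
  have halt : Function.Antiperiodic z 1 := fun i =>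
    eq_neg_of_add_eq_zero_right (congrFun hz i)
  have hcycle : k • (1 : Fin k) = 0 := by
    simpa only [Nat.card_fin] using card_nsmul_eq_zero' (x := (1 : Fin k))
  obtain ⟨m, hm⟩ := hk
  funext i
  have hi := halt.odd_nsmul_antiperiodic m i
  rw [← hm, hcycle, add_zero] at hi
  exact self_eq_neg.mp hi

lemma integrable_exp_neg_mul_min_exp_one_rpow {b θ : ℝ} (hb : 0 < b) (hbθ : b < θ) :
    Integrable fun w : ℝ => Real.exp (-b * w) * min (Real.exp w) 1 ^ θ := by
  rw [← integrableOn_univ, ← Set.Iic_union_Ioi (a := (0 : ℝ))]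
  refine IntegrableOn.union ?_ ?_
  · refine (integrableOn_exp_mul_Iic (sub_pos.mpr hbθ) 0).congr_fun (fun w hw => ?_)
      measurableSet_Iic
    dsimp only
    rw [min_eq_left (Real.exp_le_one_iff.mpr hw), ← Real.exp_mul, ← Real.exp_add]
    ring_nf
  · refine (integrableOn_exp_mul_Ioi (neg_lt_zero.mpr hb) 0).congr_fun (fun w hw => ?_)
      measurableSet_Ioi
    dsimp only
    rw [min_eq_right (Real.one_le_exp (Set.mem_Ioi.mp hw).le), Real.one_rpow, mul_one]

lemma prod_rpow_mul_prod_min_exp {k : ℕ} [NeZero k] (τ θ : ℝ) (z : Fin k → ℝ) :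
    (∏ i, Real.exp (z i)) * ((∏ i, Real.exp (z i) ^ (-τ)) *
        ∏ i, min (Real.exp (z i) * Real.exp (z (i + 1))) 1 ^ θ)
      = ∏ i, Real.exp (-((τ - 1) / 2) * cycleSum k z i) *
          min (Real.exp (cycleSum k z i)) 1 ^ θ := by
  have hweights : (∏ i, Real.exp (z i)) * ∏ i, Real.exp (z i) ^ (-τ)
      = ∏ i, Real.exp (-((τ - 1) / 2) * cycleSum k z i) := by
    simp_rw [← Real.exp_mul, ← Real.exp_sum, ← Finset.sum_mul, ← Finset.mul_sum, sum_cycleSum,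
      ← Real.exp_add]
    ring_nf
  rw [← mul_assoc, hweights, Finset.prod_mul_distrib]
  simp_rw [cycleSum_apply, Real.exp_add]

lemma setLIntegral_prod_rpow_mul_prod_min_lt_top {τ θ : ℝ} {k : ℕ} [NeZero k] (hk : Odd k)
    (hτ : 1 < τ) (hθ : (τ - 1) / 2 < θ) :
    ∫⁻ y in {y : Fin k → ℝ | ∀ i, 0 < y i}, (∏ i, ENNReal.ofReal (y i ^ (-τ))) *
      ∏ i, ENNReal.ofReal (min (y i * y (i + 1)) 1 ^ θ) < ⊤ := by
  set h : ℝ → ℝ := fun w => Real.exp (-((τ - 1) / 2) * w) * min (Real.exp w) 1 ^ θ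
  have hh : Integrable h := integrable_exp_neg_mul_min_exp_one_rpow (by linarith) hθ
  have hmeas : Measurable fun w : Fin k → ℝ => ENNReal.ofReal (∏ i, h (w i)) := by fun_prop
  have hfin : ∫⁻ w : Fin k → ℝ, ENNReal.ofReal (∏ i, h (w i)) < ⊤ :=
    (Integrable.fintype_prod fun _ => hh).lintegral_lt_top
  rw [setLIntegral_pos_eq_lintegral_exp]
  refine (lintegral_congr fun z => ?_).trans_lt
    (lintegral_comp_linearMap_lt_top (cycleSum_injective hk) hmeas hfin)
  rw [← ENNReal.ofReal_prod_of_nonneg fun i _ => by positivity,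
    ← ENNReal.ofReal_prod_of_nonneg fun i _ => by positivity,
    ← ENNReal.ofReal_mul (by positivity), ← ENNReal.ofReal_mul (by positivity),
    prod_rpow_mul_prod_min_exp]

lemma sub_one_div_two_lt_one_sub_one_div {τ x : ℝ} (hτ : τ < 3) (hx : 2 / (3 - τ) < x) :
    (τ - 1) / 2 < 1 - 1 / x := by
  have hinv : 1 / x < (3 - τ) / 2 := by
    simpa only [one_div_div] using one_div_lt_one_div_of_lt (div_pos two_pos (sub_pos.mpr hτ)) hx
  linarith

end Weights

theorem hamiltonian_cycle_integral_finite_general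
    (τ γ μbar : ℝ) (d k : ℕ) [NeZero k] (hτ : 1 < τ) (hμ : 0 < μbar) (hodd : Odd k)
    (hk : (τ - 1) / 2 < min γ 1 * (1 - 1 / (k : ℝ))) :
    (∫⁻ y : Fin k → ℝ in {y | ∀ i, 0 < y i},
        (∏ i, ENNReal.ofReal (y i ^ (-τ))) *
          ∫⁻ x : Fin k → Torus d,
            ∏ i : Fin k,
              ENNReal.ofReal
                ((min (y i * y (i + 1) / (μbar * dist (x i) (x (i + 1)) ^ d)) 1) ^ γ)
            ∂(Measure.pi fun _ => (volume : Measure (Torus d)))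
        ∂(Measure.pi fun _ => (volume : Measure ℝ))) < ⊤ := by
  have hp : 0 < 1 - 1 / (k : ℝ) :=
    (Nat.one_sub_one_div_cast_nonneg k).lt_of_ne' fun h => by
      rw [h, mul_zero] at hk
      linarith
  obtain ⟨a, hτa, ha⟩ := exists_between ((div_lt_iff₀ hp).mpr hk)
  obtain ⟨haγ, ha1⟩ := lt_min_iff.mp ha
  have ha0 : 0 < a := (div_pos (by linarith) hp).trans hτa
  obtain ⟨C, hC, hcycle⟩ := exists_lintegral_cycle_edgeKernel_le d (k := k) hμ ha0 ha1 haγ.le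
  have hmeas : MeasurableSet {y : Fin k → ℝ | ∀ i, 0 < y i} := by measurability
  calc _ ≤ ∫⁻ y in {y : Fin k → ℝ | ∀ i, 0 < y i}, C * ((∏ i, ENNReal.ofReal (y i ^ (-τ))) *
          ∏ i, ENNReal.ofReal (min (y i * y (i + 1)) 1 ^ (a * (1 - 1 / (k : ℝ))))) := by
        refine setLIntegral_mono' hmeas fun y hy => ?_
        rw [mul_left_comm]
        simp_rw [dist_eq_norm]
        gcongr
        exact hcycle (fun i => y i * y (i + 1)) fun i =>
          (mul_pos (hy i) (hy (i + 1))).le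
    _ = C * ∫⁻ y in {y : Fin k → ℝ | ∀ i, 0 < y i}, (∏ i, ENNReal.ofReal (y i ^ (-τ))) *
          ∏ i, ENNReal.ofReal (min (y i * y (i + 1)) 1 ^ (a * (1 - 1 / (k : ℝ)))) :=
        lintegral_const_mul' _ _ hC
    _ < ⊤ := ENNReal.mul_lt_top hC.lt_top
        (setLIntegral_prod_rpow_mul_prod_min_lt_top hodd hτ ((div_lt_iff₀ hp).mp hτa))

/-- finiteness of the limiting integral `I^{sub}(H_k)` for the
Hamiltonian cycle of odd length `k > 2/(3-τ)`. -/
theorem hamiltonian_cycle_integral_finite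
    (τ γ μbar : ℝ) (d k : ℕ) [NeZero k] (hd : 1 ≤ d)
    (hτ : τ ∈ Set.Ioo (2:ℝ) 3) (hγ : 1 < γ) (hμ : 0 < μbar)
    (hodd : Odd k) (hk : 2 / (3 - τ) < (k : ℝ)) :
    (∫⁻ y : Fin k → ℝ in {y | ∀ i, 0 < y i},
        (∏ i, ENNReal.ofReal (y i ^ (-τ))) *
          ∫⁻ x : Fin k → Torus d,
            ∏ i : Fin k,
              ENNReal.ofReal
                ((min (y i * y (i + 1) / (μbar * dist (x i) (x (i + 1)) ^ d)) 1) ^ γ)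
            ∂(Measure.pi fun _ => (volume : Measure (Torus d)))
        ∂(Measure.pi fun _ => (volume : Measure ℝ))) < ⊤ := by
  exact hamiltonian_cycle_integral_finite_general τ γ μbar d k (by linarith [hτ.1]) hμ hodd
    (by simpa only [min_eq_right hγ.le, one_mul] using sub_one_div_two_lt_one_sub_one_div hτ.2 hk)

end
end
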